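/- Let ε_k → 0 as k → ∞ and let φ_{ε_k} be a sequence of normalised self-similar profiles for K_{ε_k}. Then φ_{ε_k}(x) → e^{−x} as k → ∞ for every x ∈ (0,∞) at which every φ_{ε_k} satisfies the profile equation; in particular φ_{ε_k}(x) → e^{−x} for almost every x ∈ (0,∞). -/

import Mathlib

open MeasureTheory Real Set Filter

noncomputable def weight (a b x : ℝ) : ℝ := if x ≤ 1 then x ^ a else x ^ b

noncomputable def Xnorm (a b : ℝ) (g : ℝ → ℝ) : ℝ :=
  ∫ x in Ioi (0:ℝ), |g x| * weight a b x

def MemX (a b : ℝ) (g : ℝ → ℝ) : Prop :=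
  IntegrableOn (fun x => g x * weight a b x) (Ioi 0)

noncomputable def Kern (ε : ℝ) (W : ℝ → ℝ → ℝ) (x y : ℝ) : ℝ := 2 + ε * W x y

def GoodW (α : ℝ) (W : ℝ → ℝ → ℝ) : Prop :=
  ContinuousOn (fun p : ℝ × ℝ => W p.1 p.2) (Ioi 0 ×ˢ Ioi 0) ∧
  (∀ x y : ℝ, 0 < x → 0 < y → W x y = W y x) ∧
  (∀ l x y : ℝ, 0 < l → 0 < x → 0 < y → W (l * x) (l * y) = W x y) ∧
  (∀ x y : ℝ, 0 < x → 0 < y → 0 ≤ W x y ∧ W x y ≤ (x / y) ^ α + (y / x) ^ α)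

def IsProfile (K : ℝ → ℝ → ℝ) (φ : ℝ → ℝ) : Prop :=
  LocallyIntegrableOn φ (Ioi 0) ∧
  (∀ᵐ x ∂(volume.restrict (Ioi (0:ℝ))), 0 ≤ φ x) ∧
  IntegrableOn (fun x => x * φ x) (Ioi 0) ∧
  (∀ᵐ x ∂(volume.restrict (Ioi (0:ℝ))),
    x ^ 2 * φ x = ∫ y in Ioo 0 x, ∫ z in Ioi (x - y), y * K y z * φ y * φ z)

def IsNormalised (φ : ℝ → ℝ) : Prop := ∫ x in Ioi (0:ℝ), x * φ x = 1

open scoped ENNReal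

noncomputable def Kk (ε : ℝ) (w : ℝ → ℝ → ℝ≥0∞) (y z : ℝ) : ℝ≥0∞ := 2 + ENNReal.ofReal ε * w y z

noncomputable def muP (p : ℝ → ℝ≥0∞) : Measure ℝ := (volume.restrict (Ioi 0)).withDensity p

noncomputable def Ind (y z x : ℝ) : ℝ≥0∞ := (Ioo y (y + z)).indicator 1 x

noncomputable def II (ε : ℝ) (w : ℝ → ℝ → ℝ≥0∞) (p : ℝ → ℝ≥0∞) (x : ℝ) : ℝ≥0∞ :=
  ∫⁻ y, ∫⁻ z, ENNReal.ofReal y * Kk ε w y z * Ind y z x ∂muP p ∂muP p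

structure WOk (α : ℝ) (w : ℝ → ℝ → ℝ≥0∞) : Prop where
  a0 : 0 < α
  a1 : α < 1
  wm : Measurable (Function.uncurry w)
  wsymm : ∀ y z, w y z = w z y
  wle : ∀ y z, 0 < y → 0 < z → w y z ≤ ENNReal.ofReal ((y / z) ^ α + (z / y) ^ α)

structure Prof (α ε : ℝ) (w : ℝ → ℝ → ℝ≥0∞) (p : ℝ → ℝ≥0∞) : Prop extends WOk α w where
  e0 : 0 < ε
  pm : Measurable p
  pfin : ∀ x, p x ≠ ∞
  mass : ∫⁻ x, ENNReal.ofReal x ∂muP p = 1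
  eqn : ∀ᵐ x ∂(volume.restrict (Ioi (0:ℝ))), ENNReal.ofReal (x ^ 2) * p x = II ε w p x

lemma Ind_meas : Measurable (fun q : ℝ × ℝ × ℝ => Ind q.1 q.2.1 q.2.2) := by
  have h1 : MeasurableSet {q : ℝ × ℝ × ℝ | q.1 < q.2.2} :=
    measurableSet_lt (by fun_prop) (by fun_prop)
  have h2 : MeasurableSet {q : ℝ × ℝ × ℝ | q.2.2 < q.1 + q.2.1} :=
    measurableSet_lt (by fun_prop) (by fun_prop)
  have h3 : Measurable (({q : ℝ × ℝ × ℝ | q.1 < q.2.2} ∩ {q : ℝ × ℝ × ℝ | q.2.2 < q.1 + q.2.1}).indicator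
      (fun _ => (1:ℝ≥0∞))) := measurable_const.indicator (h1.inter h2)
  convert h3 using 1
  ext q
  simp only [Ind, indicator, mem_inter_iff, mem_ofPred_eq, mem_Ioo, Pi.one_apply]

lemma Ind_meas' {β : Type*} [MeasurableSpace β] {f g h : β → ℝ} (hf : Measurable f)
    (hg : Measurable g) (hh : Measurable h) : Measurable (fun b => Ind (f b) (g b) (h b)) :=
  Ind_meas.comp (hf.prodMk (hg.prodMk hh))

lemma Kk_meas {α ε : ℝ} {w} (hw : WOk α w) : Measurable (fun q : ℝ × ℝ => Kk ε w q.1 q.2) := by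
  have := hw.wm
  unfold Kk
  exact measurable_const.add (measurable_const.mul this)

lemma Kk_meas' {α ε : ℝ} {w} (hw : WOk α w) {β : Type*} [MeasurableSpace β] {f g : β → ℝ}
    (hf : Measurable f) (hg : Measurable g) : Measurable (fun b => Kk ε w (f b) (g b)) :=
  (Kk_meas hw).comp (hf.prodMk hg)

instance muP_sf (p : ℝ → ℝ≥0∞) [Fact (Measurable p)] : SFinite (muP p) := by
  unfold muP; infer_instance

instance muP_sf' (p : ℝ → ℝ≥0∞) : SFinite (muP p) := by
  unfold muP; infer_instance

lemma ae_muP (p : ℝ → ℝ≥0∞) : ∀ᵐ x ∂(muP p), 0 < x := by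
  have : ∀ᵐ x ∂(volume.restrict (Ioi (0:ℝ))), 0 < x := ae_restrict_mem measurableSet_Ioi
  exact (withDensity_absolutelyContinuous _ _).ae_le this

lemma lint_muP {p : ℝ → ℝ≥0∞} (pm : Measurable p) {f : ℝ → ℝ≥0∞} (hf : Measurable f) :
    ∫⁻ x, f x ∂muP p = ∫⁻ x in Ioi 0, p x * f x := by
  unfold muP
  rw [lintegral_withDensity_eq_lintegral_mul _ pm hf]; rfl

lemma II_meas {α ε : ℝ} {w} (hw : WOk α w) (p : ℝ → ℝ≥0∞) : Measurable (II ε w p) := by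
  unfold II
  apply Measurable.lintegral_prod_right' (f := fun q : ℝ × ℝ => ∫⁻ z, ENNReal.ofReal q.2 * Kk ε w q.2 z * Ind q.2 z q.1 ∂muP p)
  apply Measurable.lintegral_prod_right' (f := fun q : (ℝ × ℝ) × ℝ => ENNReal.ofReal q.1.2 * Kk ε w q.1.2 q.2 * Ind q.1.2 q.2 q.1.1)
  have := Kk_meas' (ε := ε) hw (β := (ℝ × ℝ) × ℝ) (f := fun q => q.1.2) (g := fun q => q.2) (by fun_prop) (by fun_prop)
  have := Ind_meas' (β := (ℝ × ℝ) × ℝ) (f := fun q => q.1.2) (g := fun q => q.2) (h := fun q => q.1.1) (by fun_prop) (by fun_prop) (by fun_prop)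
  fun_prop

/-- Tonelli for the weak form -/
lemma II_tonelli {α ε : ℝ} {w} (hw : WOk α w) (p : ℝ → ℝ≥0∞) {ψ : ℝ → ℝ≥0∞} (hψ : Measurable ψ) :
    ∫⁻ x in Ioi 0, ψ x * II ε w p x =
    ∫⁻ y, ∫⁻ z, ENNReal.ofReal y * Kk ε w y z * (∫⁻ x in Ioo y (y + z), ψ x) ∂muP p ∂muP p := by
  have mK := Kk_meas' (ε := ε) hw (β := (ℝ × ℝ) × ℝ) (f := fun q => q.1.2) (g := fun q => q.2) (by fun_prop) (by fun_prop)
  have mI := Ind_meas' (β := (ℝ × ℝ) × ℝ) (f := fun q => q.1.2) (g := fun q => q.2) (h := fun q => q.1.1) (by fun_prop) (by fun_prop) (by fun_prop)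
  have mJ : Measurable (fun q : (ℝ × ℝ) × ℝ => ψ q.1.1 * (ENNReal.ofReal q.1.2 * Kk ε w q.1.2 q.2 * Ind q.1.2 q.2 q.1.1)) := by
    fun_prop
  have mL : Measurable (fun q : (ℝ × ℝ) × ℝ => (ENNReal.ofReal q.1.2 * Kk ε w q.1.2 q.2 * Ind q.1.2 q.2 q.1.1)) := by
    fun_prop
  have h1 : ∀ x, ψ x * II ε w p x = ∫⁻ y, ∫⁻ z, ψ x * (ENNReal.ofReal y * Kk ε w y z * Ind y z x) ∂muP p ∂muP p := by
    intro x
    unfold II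
    rw [← lintegral_const_mul]
    · congr 1; ext y
      rw [← lintegral_const_mul]
      exact mL.comp (f := fun z => ((x, y), z)) (by fun_prop)
    · exact (Measurable.lintegral_prod_right' mL).comp (f := fun y => (x,y)) (by fun_prop)
  simp_rw [h1]
  rw [lintegral_lintegral_swap]
  swap
  · exact (Measurable.lintegral_prod_right' mJ).aemeasurable
  apply lintegral_congr_ae
  filter_upwards [ae_muP p] with y hy
  rw [lintegral_lintegral_swap]
  swap
  · exact (mJ.comp (f := fun q : ℝ × ℝ => ((q.1, y), q.2)) (by fun_prop)).aemeasurable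
  apply lintegral_congr_ae
  filter_upwards [ae_muP p] with z hz
  have h2 : ∀ x, ψ x * (ENNReal.ofReal y * Kk ε w y z * Ind y z x) =
      ENNReal.ofReal y * Kk ε w y z * (Ioo y (y+z)).indicator ψ x := by
    intro x
    unfold Ind
    by_cases hx : x ∈ Ioo y (y+z)
    · simp [hx, mul_comm]
    · simp [hx]
  simp_rw [h2]
  rw [lintegral_const_mul _ (hψ.indicator measurableSet_Ioo)]
  rw [setLIntegral_indicator measurableSet_Ioo]
  congr 2
  rw [inter_eq_left.mpr]
  intro t ht; exact hy.trans ht.1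

lemma weak_form {α ε : ℝ} {w p} (h : Prof α ε w p) {ψ : ℝ → ℝ≥0∞} (hψ : Measurable ψ) :
    ∫⁻ x, ψ x * ENNReal.ofReal (x^2) ∂muP p =
    ∫⁻ y, ∫⁻ z, ENNReal.ofReal y * Kk ε w y z * (∫⁻ x in Ioo y (y + z), ψ x) ∂muP p ∂muP p := by
  rw [← II_tonelli h.toWOk p hψ, lint_muP h.pm (by fun_prop)]
  apply lintegral_congr_ae
  filter_upwards [h.eqn] with x hx
  rw [← hx]; ring

lemma lint_Ioo {a b : ℝ} (hab : a ≤ b) {F f : ℝ → ℝ} (hF : ∀ x ∈ Icc a b, HasDerivAt F (f x) x)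
    (hf : ContinuousOn f (Icc a b)) (h0 : ∀ x ∈ Icc a b, 0 ≤ f x) :
    ∫⁻ x in Ioo a b, ENNReal.ofReal (f x) = ENNReal.ofReal (F b - F a) := by
  have hint : IntervalIntegrable f volume a b := by
    apply ContinuousOn.intervalIntegrable
    rwa [uIcc_of_le hab]
  rw [← intervalIntegral.integral_eq_sub_of_hasDerivAt (f := F) (f' := f)
    (by rwa [uIcc_of_le hab]) hint,
    intervalIntegral.integral_of_le hab, ← restrict_Ioo_eq_restrict_Ioc]
  rw [ofReal_integral_eq_lintegral_ofReal]
  · exact hf.integrableOn_Icc.mono_set Ioo_subset_Icc_self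
  · filter_upwards [ae_restrict_mem measurableSet_Ioo] with x hx
    exact h0 x (Ioo_subset_Icc_self hx)

lemma exp_aux1 (t : ℝ) : 0 ≤ 1 - exp (-t) - t * exp (-t) := by
  have h := Real.add_one_le_exp t
  have h2 : exp t * exp (-t) = 1 := by rw [← Real.exp_add]; simp
  have h3 := Real.exp_pos (-t)
  nlinarith

lemma psi_int {q y z : ℝ} (hy : 0 < y) (hz : 0 < z) :
    ∫⁻ x in Ioo y (y+z), ENNReal.ofReal ((1 - exp (-(q*x)) - q*x*exp (-(q*x))) / x^2) =
    ENNReal.ofReal ((1 - exp (-(q*y)))/y - (1 - exp (-(q*(y+z))))/(y+z)) := by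
  rw [lint_Ioo (F := fun x => - ((1 - exp (-(q*x)))/x)) (by linarith)]
  · congr 1; ring
  · intro x hx
    have hx0 : x ≠ 0 := by have := hx.1; intro h; linarith
    have h1 : HasDerivAt (fun x => exp (-(q*x))) (exp (-(q*x)) * (-(q*1))) x :=
      (((hasDerivAt_id x).const_mul q).neg).exp
    have h2 := (((h1.const_sub 1).div (hasDerivAt_id x) hx0)).neg
    refine HasDerivAt.congr_deriv h2 ?_
    simp only [id]
    field_simp
    ring
  · apply ContinuousOn.div (by fun_prop) (by fun_prop)
    intro x hx
    have hx0 : x ≠ 0 := by have := hx.1; intro h; linarith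
    positivity
  · intro x hx
    exact div_nonneg (exp_aux1 _) (by positivity)

lemma lap_id {α ε : ℝ} {w p} (h : Prof α ε w p) (q : ℝ) (hq : 0 < q) :
    2 * ∫⁻ x, ENNReal.ofReal (1 - exp (-(q*x)) - q*x*exp (-(q*x))) ∂muP p =
    ∫⁻ y, ∫⁻ z, Kk ε w y z * (ENNReal.ofReal (1 - exp (-(q*y))) * ENNReal.ofReal (1 - exp (-(q*z))))
      ∂muP p ∂muP p := by
  have mK := Kk_meas (ε := ε) h.toWOk
  have h1 : ∫⁻ x, ENNReal.ofReal (1 - exp (-(q*x)) - q*x*exp (-(q*x))) ∂muP p =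
     ∫⁻ y, ∫⁻ z, Kk ε w y z * (ENNReal.ofReal (y * ((1 - exp (-(q*y)))/y - (1 - exp (-(q*(y+z))))/(y+z)))) ∂muP p ∂muP p := by
    have := weak_form h (ψ := fun x => ENNReal.ofReal ((1 - exp (-(q*x)) - q*x*exp (-(q*x))) / x^2)) (by fun_prop)
    refine Eq.trans (Eq.trans ?_ this) ?_
    rotate_left
    · apply lintegral_congr_ae
      filter_upwards [ae_muP p] with y hy
      apply lintegral_congr_ae
      filter_upwards [ae_muP p] with z hz
      rw [psi_int hy hz, ENNReal.ofReal_mul hy.le]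
      ring
    · apply lintegral_congr_ae
      filter_upwards [ae_muP p] with x hx
      rw [← ENNReal.ofReal_mul (div_nonneg (exp_aux1 _) (by positivity))]
      congr 1
      field_simp
  have h2 : ∫⁻ x, ENNReal.ofReal (1 - exp (-(q*x)) - q*x*exp (-(q*x))) ∂muP p =
     ∫⁻ y, ∫⁻ z, Kk ε w y z * (ENNReal.ofReal (z * ((1 - exp (-(q*z)))/z - (1 - exp (-(q*(z+y))))/(z+y)))) ∂muP p ∂muP p := by
    rw [h1, lintegral_lintegral_swap]
    · apply lintegral_congr; intro y
      apply lintegral_congr; intro z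
      unfold Kk; rw [h.wsymm]
    · apply Measurable.aemeasurable
      apply mK.mul
      fun_prop
  rw [two_mul]
  nth_rewrite 1 [h1]
  rw [h2, ← lintegral_add_left]
  swap
  · apply Measurable.lintegral_prod_right' (f := fun q' : ℝ × ℝ => Kk ε w q'.1 q'.2 * (ENNReal.ofReal (q'.1 * ((1 - exp (-(q*q'.1)))/q'.1 - (1 - exp (-(q*(q'.1+q'.2))))/(q'.1+q'.2)))))
    fun_prop
  apply lintegral_congr_ae
  filter_upwards [ae_muP p] with y hy
  rw [← lintegral_add_left]
  swap
  · have : Measurable (fun z => Kk ε w y z) := mK.comp (f := fun z => (y,z)) (by fun_prop)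
    fun_prop
  apply lintegral_congr_ae
  filter_upwards [ae_muP p] with z hz
  have key : ∀ a b : ℝ, 0 < a → 0 < b → 0 ≤ a * ((1 - exp (-(q*a)))/a - (1 - exp (-(q*(a+b))))/(a+b)) := by
    intro a b ha hb
    have e1 : a * ((1 - exp (-(q*a)))/a - (1 - exp (-(q*(a+b))))/(a+b)) =
      ((a+b) * (1 - exp (-(q*a))) - a * (1 - exp (-(q*(a+b)))))/(a+b) := by field_simp
    rw [e1]
    apply div_nonneg _ (by positivity)
    have e2 : exp (-(q*(a+b))) = exp (-(q*a)) * exp (-(q*b)) := by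
      rw [← Real.exp_add]; congr 1; ring
    rw [e2]
    have h3 := exp_aux1 (q*a)
    have h4 : 1 - q*b ≤ exp (-(q*b)) := by have := Real.add_one_le_exp (-(q*b)); linarith
    have h5 := Real.exp_pos (-(q*a))
    have : (a+b) * (1 - exp (-(q*a))) - a * (1 - exp (-(q*a)) * exp (-(q*b))) =
       b * (1 - exp (-(q*a)) - (q*a)*exp (-(q*a))) + a * exp (-(q*a)) * (exp (-(q*b)) - (1 - q*b)) := by ring
    rw [this]
    have h6 : 0 ≤ exp (-(q*b)) - (1 - q*b) := by linarith
    positivity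
  rw [← mul_add, ← ENNReal.ofReal_add (key y z hy hz) (key z y hz hy), ← ENNReal.ofReal_mul]
  swap
  · have : exp (-(q*y)) ≤ 1 := by rw [Real.exp_le_one_iff]; nlinarith
    linarith
  congr 2
  have e2 : exp (-(q*(y+z))) = exp (-(q*y)) * exp (-(q*z)) := by
      rw [← Real.exp_add]; congr 1; ring
  rw [add_comm z y, e2]
  field_simp
  ring

lemma lap_id2 {α ε : ℝ} {w p} (h : Prof α ε w p) (q : ℝ) (hq : 0 < q) :
    2 * ∫⁻ x, ENNReal.ofReal (1 - exp (-(q*x)) - q*x*exp (-(q*x))) ∂muP p =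
    2 * (∫⁻ y, ENNReal.ofReal (1 - exp (-(q*y))) ∂muP p)^2 +
    ENNReal.ofReal ε * ∫⁻ y, ∫⁻ z, w y z * (ENNReal.ofReal (1 - exp (-(q*y))) * ENNReal.ofReal (1 - exp (-(q*z))))
      ∂muP p ∂muP p := by
  rw [lap_id h q hq]
  have wm := h.wm
  have wm1 : ∀ y, Measurable (fun z => w y z) := fun y => wm.comp (f := fun z => (y,z)) (by fun_prop)
  have m2 : Measurable (fun y => ∫⁻ z, w y z * (ENNReal.ofReal (1 - exp (-(q*y))) * ENNReal.ofReal (1 - exp (-(q*z)))) ∂muP p) :=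
    Measurable.lintegral_prod_right' (f := fun q' : ℝ × ℝ => w q'.1 q'.2 * (ENNReal.ofReal (1 - exp (-(q*q'.1))) * ENNReal.ofReal (1 - exp (-(q*q'.2))))) (wm.mul (by fun_prop))
  rw [sq, ← lintegral_const_mul _ (by fun_prop), ← lintegral_const_mul _ (by fun_prop), ← lintegral_const_mul _ m2, ← lintegral_add_left (by fun_prop)]
  congr 1; ext y
  have := wm1 y
  rw [← lintegral_const_mul _ (by fun_prop), mul_comm (∫⁻ y, ENNReal.ofReal (1 - exp (-(q*y))) ∂muP p), ← mul_assoc, ← lintegral_const_mul _ (by fun_prop),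
    ← lintegral_add_left (by fun_prop)]
  congr 1; ext z
  unfold Kk; ring

lemma one_sub_exp_le (t : ℝ) : 1 - exp (-t) ≤ t := by
  have := Real.add_one_le_exp (-t); linarith

lemma one_sub_exp_nonneg {t : ℝ} (ht : 0 ≤ t) : 0 ≤ 1 - exp (-t) := by
  have : exp (-t) ≤ 1 := by rw [Real.exp_le_one_iff]; linarith
  linarith

lemma Qe_le_one {α ε : ℝ} {w p} (h : Prof α ε w p) (q : ℝ) (hq : 0 < q) :
    ∫⁻ x, ENNReal.ofReal (1 - exp (-(q*x))) ∂muP p ≤ 1 := by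
  set A := ∫⁻ x, ENNReal.ofReal (1 - exp (-(q*x))) ∂muP p with hA
  have hfin : A ≠ ∞ := by
    have : A ≤ ∫⁻ x, ENNReal.ofReal q * ENNReal.ofReal x ∂muP p := by
      apply lintegral_mono
      intro x
      simp only
      rw [← ENNReal.ofReal_mul hq.le]
      exact ENNReal.ofReal_le_ofReal (one_sub_exp_le _)
    rw [lintegral_const_mul _ (by fun_prop), h.mass] at this
    exact ne_top_of_le_ne_top (by simp) this
  have h1 : 2 * A^2 ≤ 2 * A := by
    calc 2 * A^2 ≤ _ := le_self_add
      _ = _ := (lap_id2 h q hq).symm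
      _ ≤ 2 * A := by
        gcongr
        rw [hA]
        apply lintegral_mono_ae
        filter_upwards [ae_muP p] with x hx
        apply ENNReal.ofReal_le_ofReal
        have : 0 ≤ q*x*exp (-(q*x)) := by positivity
        linarith
  clear_value A
  clear hA
  lift A to NNReal using hfin
  norm_cast at *
  by_contra hc
  push Not at hc
  have h2 : A^2 ≤ A := by
    have : (0:NNReal) < 2 := by norm_num
    exact le_of_mul_le_mul_left h1 this
  nlinarith

lemma mass_le_one {α ε : ℝ} {w p} (h : Prof α ε w p) : muP p univ ≤ 1 := by
  have h1 : Tendsto (fun n : ℕ => ∫⁻ x, ENNReal.ofReal (1 - exp (-(((n:ℝ)+1)*x))) ∂muP p) atTop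
      (nhds (∫⁻ x, 1 ∂muP p)) := by
    apply lintegral_tendsto_of_tendsto_of_monotone
    · intro n; fun_prop
    · filter_upwards [ae_muP p] with x hx
      intro n m hnm
      apply ENNReal.ofReal_le_ofReal
      have : (n:ℝ) ≤ m := by exact_mod_cast hnm
      gcongr
    · filter_upwards [ae_muP p] with x hx
      rw [← ENNReal.ofReal_one]
      apply ENNReal.tendsto_ofReal
      have : Tendsto (fun n : ℕ => (1:ℝ) - exp (-(((n:ℝ)+1)*x))) atTop (nhds (1 - 0)) := by
        apply Tendsto.sub tendsto_const_nhds
        apply Real.tendsto_exp_neg_atTop_nhds_zero.comp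
        apply Tendsto.atTop_mul_const hx
        exact tendsto_atTop_add_const_right _ _ tendsto_natCast_atTop_atTop
      simpa using this
  rw [lintegral_one] at h1
  exact le_of_tendsto' h1 (fun n => Qe_le_one h _ (by positivity))

lemma Prof.fin {α ε : ℝ} {w p} (h : Prof α ε w p) : IsFiniteMeasure (muP p) :=
  ⟨lt_of_le_of_lt (mass_le_one h) (by simp)⟩

lemma Prof.int_id {α ε : ℝ} {w p} (h : Prof α ε w p) : Integrable (fun x : ℝ => x) (muP p) := by
  refine ⟨by fun_prop, ?_⟩
  rw [hasFiniteIntegral_iff_ofReal]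
  · rw [h.mass]; simp
  · filter_upwards [ae_muP p] with x hx using hx.le

lemma Prof.integral_id {α ε : ℝ} {w p} (h : Prof α ε w p) : ∫ x, x ∂(muP p) = 1 := by
  rw [integral_eq_lintegral_of_nonneg_ae _ (by fun_prop), h.mass]; · simp
  filter_upwards [ae_muP p] with x hx using hx.le

noncomputable def QQ (p : ℝ → ℝ≥0∞) (q : ℝ) : ℝ := ∫ x, (1 - exp (-(q*x))) ∂muP p
noncomputable def Q1 (p : ℝ → ℝ≥0∞) (q : ℝ) : ℝ := ∫ x, x * exp (-(q*x)) ∂muP p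

lemma Prof.int_Q {α ε : ℝ} {w p} (h : Prof α ε w p) {q : ℝ} (hq : 0 ≤ q) :
    Integrable (fun x : ℝ => 1 - exp (-(q*x))) (muP p) := by
  refine (h.int_id.const_mul q).mono' (by fun_prop) ?_
  filter_upwards [ae_muP p] with x hx
  rw [Real.norm_of_nonneg (one_sub_exp_nonneg (by positivity))]
  exact one_sub_exp_le _

lemma Prof.int_Q1 {α ε : ℝ} {w p} (h : Prof α ε w p) {q : ℝ} (hq : 0 ≤ q) :
    Integrable (fun x : ℝ => x * exp (-(q*x))) (muP p) := by
  refine (h.int_id).mono' (by fun_prop) ?_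
  filter_upwards [ae_muP p] with x hx
  rw [Real.norm_of_nonneg (by positivity)]
  have := one_sub_exp_nonneg (t := q*x) (by positivity)
  nlinarith

lemma QQ_nonneg (p : ℝ → ℝ≥0∞) {q : ℝ} (hq : 0 ≤ q) : 0 ≤ QQ p q := by
  apply integral_nonneg_of_ae
  filter_upwards [ae_muP p] with x hx
  exact one_sub_exp_nonneg (by positivity)

lemma Prof.ofReal_QQ {α ε : ℝ} {w p} (h : Prof α ε w p) {q : ℝ} (hq : 0 ≤ q) :
    ∫⁻ x, ENNReal.ofReal (1 - exp (-(q*x))) ∂muP p = ENNReal.ofReal (QQ p q) := by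
  unfold QQ
  rw [ofReal_integral_eq_lintegral_ofReal (h.int_Q hq)]
  filter_upwards [ae_muP p] with x hx
  exact one_sub_exp_nonneg (by positivity)

lemma Prof.QQ_le_one {α ε : ℝ} {w p} (h : Prof α ε w p) {q : ℝ} (hq : 0 < q) : QQ p q ≤ 1 := by
  have := Qe_le_one h q hq
  rw [h.ofReal_QQ hq.le] at this
  simpa using this

lemma Prof.QQ_le {α ε : ℝ} {w p} (h : Prof α ε w p) {q : ℝ} (hq : 0 ≤ q) : QQ p q ≤ q := by
  calc QQ p q ≤ ∫ x, q * x ∂muP p := by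
        apply integral_mono_ae (h.int_Q hq) (h.int_id.const_mul q)
        filter_upwards with x using one_sub_exp_le _
    _ = q := by rw [integral_const_mul, h.integral_id, mul_one]

/-- moments -/
lemma mom_pos {α ε : ℝ} {w p} (h : Prof α ε w p) {b : ℝ} (hb0 : 0 ≤ b) (hb1 : b ≤ 1) :
    ∫⁻ x, ENNReal.ofReal (x ^ b) ∂muP p ≤ 2 := by
  calc ∫⁻ x, ENNReal.ofReal (x ^ b) ∂muP p ≤ ∫⁻ x, (1 + ENNReal.ofReal x) ∂muP p := by
        apply lintegral_mono_ae
        filter_upwards [ae_muP p] with x hx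
        rw [← ENNReal.ofReal_one, ← ENNReal.ofReal_add (by simp) hx.le]
        apply ENNReal.ofReal_le_ofReal
        rcases le_total x 1 with h1 | h1
        · have := Real.rpow_le_one hx.le h1 hb0
          linarith
        · have := Real.rpow_le_rpow_of_exponent_le h1 hb1
          rw [Real.rpow_one] at this
          linarith
    _ = muP p univ + 1 := by
        rw [lintegral_add_left (by fun_prop), h.mass, lintegral_one]
    _ ≤ 1 + 1 := by gcongr; exact mass_le_one h
    _ = 2 := by norm_num

lemma B_bound {α ε : ℝ} {w p} (h : Prof α ε w p) {q : ℝ} (hq : 0 < q) :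
    ∫⁻ y, ∫⁻ z, w y z * (ENNReal.ofReal (1 - exp (-(q*y))) * ENNReal.ofReal (1 - exp (-(q*z))))
      ∂muP p ∂muP p ≤ ENNReal.ofReal (4 * q^(2-α)) := by
  have a0 := h.a0
  have a1 := h.a1
  set Ap := ∫⁻ y, ENNReal.ofReal (y^α * (1 - exp (-(q*y)))) ∂muP p with hAp
  set Am := ∫⁻ y, ENNReal.ofReal (y^(-α) * (1 - exp (-(q*y)))) ∂muP p with hAm
  have hAp1 : Ap ≤ ENNReal.ofReal (q^(1-α)) := by
    calc Ap ≤ ∫⁻ y, ENNReal.ofReal (q^(1-α)) * ENNReal.ofReal y ∂muP p := by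
          apply lintegral_mono_ae
          filter_upwards [ae_muP p] with y hy
          rw [← ENNReal.ofReal_mul (by positivity)]
          apply ENNReal.ofReal_le_ofReal
          have h1 : 1 - exp (-(q*y)) ≤ (q*y)^(1-α) := by
            rcases le_total (q*y) 1 with h1 | h1
            · calc 1 - exp (-(q*y)) ≤ q*y := one_sub_exp_le _
                _ = (q*y)^(1:ℝ) := by simp
                _ ≤ _ := Real.rpow_le_rpow_of_exponent_ge (by positivity) h1 (by linarith)
            · have := Real.one_le_rpow h1 (z := 1-α) (by linarith)
              have := Real.exp_pos (-(q*y))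
              linarith
          calc y^α * (1 - exp (-(q*y))) ≤ y^α * (q*y)^(1-α) := by gcongr
            _ = q^(1-α) * (y^α * y^(1-α)) := by
              rw [Real.mul_rpow hq.le hy.le]; ring
            _ = q^(1-α) * y := by rw [← Real.rpow_add hy]; simp
      _ = _ := by rw [lintegral_const_mul _ (by fun_prop), h.mass, mul_one]
  have hAm1 : Am ≤ ENNReal.ofReal (2*q) := by
    calc Am ≤ ∫⁻ y, ENNReal.ofReal q * ENNReal.ofReal (y^(1-α)) ∂muP p := by
          apply lintegral_mono_ae
          filter_upwards [ae_muP p] with y hy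
          rw [← ENNReal.ofReal_mul (by positivity)]
          apply ENNReal.ofReal_le_ofReal
          have h1 : 1 - exp (-(q*y)) ≤ q*y := one_sub_exp_le _
          calc y^(-α) * (1 - exp (-(q*y))) ≤ y^(-α) * (q*y) := by gcongr
            _ = q * (y^(-α) * y^(1:ℝ)) := by rw [Real.rpow_one]; ring
            _ = q * y^(1-α) := by rw [← Real.rpow_add hy]; congr 2; ring
      _ ≤ ENNReal.ofReal q * 2 := by
          rw [lintegral_const_mul _ (by fun_prop)]
          gcongr
          exact mom_pos h (by linarith) (by linarith)
      _ = _ := by rw [mul_comm 2 q, ENNReal.ofReal_mul hq.le]; simp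
  calc _ ≤ ∫⁻ y, ∫⁻ z, (ENNReal.ofReal (y^α * (1 - exp (-(q*y)))) * ENNReal.ofReal (z^(-α) * (1 - exp (-(q*z))))
          + ENNReal.ofReal (y^(-α) * (1 - exp (-(q*y)))) * ENNReal.ofReal (z^(α) * (1 - exp (-(q*z))))) ∂muP p ∂muP p := by
        apply lintegral_mono_ae
        filter_upwards [ae_muP p] with y hy
        apply lintegral_mono_ae
        filter_upwards [ae_muP p] with z hz
        have e1 := one_sub_exp_nonneg (t := q*y) (by positivity)
        have e2 := one_sub_exp_nonneg (t := q*z) (by positivity)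
        refine (mul_le_mul_left (h.wle y z hy hz) _).trans (le_of_eq ?_)
        rw [← ENNReal.ofReal_mul e1, ← ENNReal.ofReal_mul (by positivity), ← ENNReal.ofReal_mul (by positivity), ← ENNReal.ofReal_mul (by positivity),
          ← ENNReal.ofReal_add (by positivity) (by positivity)]
        congr 1
        rw [Real.div_rpow hy.le hz.le, Real.div_rpow hz.le hy.le, Real.rpow_neg hy.le, Real.rpow_neg hz.le]
        field_simp
    _ = Ap * Am + Am * Ap := by
        have : ∀ y, ∫⁻ z, (ENNReal.ofReal (y^α * (1 - exp (-(q*y)))) * ENNReal.ofReal (z^(-α) * (1 - exp (-(q*z))))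
          + ENNReal.ofReal (y^(-α) * (1 - exp (-(q*y)))) * ENNReal.ofReal (z^(α) * (1 - exp (-(q*z))))) ∂muP p
          = ENNReal.ofReal (y^α * (1 - exp (-(q*y)))) * Am + ENNReal.ofReal (y^(-α) * (1 - exp (-(q*y)))) * Ap := by
          intro y
          rw [lintegral_add_left (by fun_prop), lintegral_const_mul _ (by fun_prop), lintegral_const_mul _ (by fun_prop)]
        simp_rw [this]
        rw [lintegral_add_left (by fun_prop), lintegral_mul_const _ (by fun_prop), lintegral_mul_const _ (by fun_prop)]
    _ ≤ ENNReal.ofReal (q^(1-α)) * ENNReal.ofReal (2*q) + ENNReal.ofReal (2*q) * ENNReal.ofReal (q^(1-α)) := by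
        gcongr
    _ = _ := by
        rw [← ENNReal.ofReal_mul (by positivity), ← ENNReal.ofReal_mul (by positivity), ← ENNReal.ofReal_add (by positivity) (by positivity)]
        congr 1
        rw [show (2 - α) = (1-α) + 1 by ring, Real.rpow_add hq, Real.rpow_one]
        ring

lemma Prof.ric {α ε : ℝ} {w p} (h : Prof α ε w p) {q : ℝ} (hq : 0 < q) :
    (QQ p q)^2 ≤ QQ p q - q * Q1 p q ∧ QQ p q - q * Q1 p q ≤ (QQ p q)^2 + 2 * ε * q^(2-α) := by
  have e0 := h.e0
  have h1 := lap_id2 h q hq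
  have hB := B_bound h hq
  set B := ∫⁻ y, ∫⁻ z, w y z * (ENNReal.ofReal (1 - exp (-(q*y))) * ENNReal.ofReal (1 - exp (-(q*z))))
      ∂muP p ∂muP p
  have h2 : ∫⁻ x, ENNReal.ofReal (1 - exp (-(q*x)) - q*x*exp (-(q*x))) ∂muP p = ENNReal.ofReal (QQ p q - q * Q1 p q) := by
    unfold QQ Q1
    rw [← integral_const_mul, ← integral_sub (h.int_Q hq.le) ((h.int_Q1 hq.le).const_mul q),
      ofReal_integral_eq_lintegral_ofReal]
    · congr 1; ext x; congr 1; ring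
    · exact (h.int_Q hq.le).sub ((h.int_Q1 hq.le).const_mul q)
    · filter_upwards with x
      have := exp_aux1 (q*x)
      simp only [Pi.zero_apply]
      linarith
  have h2' : 0 ≤ QQ p q - q * Q1 p q := by
    unfold QQ Q1
    rw [← integral_const_mul, ← integral_sub (h.int_Q hq.le) ((h.int_Q1 hq.le).const_mul q)]
    apply integral_nonneg
    intro x
    have := exp_aux1 (q*x)
    simp only [Pi.zero_apply]
    linarith
  rw [h2, h.ofReal_QQ hq.le] at h1
  have hq0 := QQ_nonneg p hq.le
  have hBf : B ≠ ∞ := ne_top_of_le_ne_top ENNReal.ofReal_ne_top hB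
  have hB2 : B.toReal ≤ 4 * q^(2-α) := ENNReal.toReal_le_of_le_ofReal (by positivity) hB
  have h3 : 2 * (QQ p q - q * Q1 p q) = 2 * (QQ p q)^2 + ε * B.toReal := by
    have := congrArg ENNReal.toReal h1
    rw [ENNReal.toReal_add (by finiteness) (by finiteness)] at this
    simp only [ENNReal.toReal_mul, ENNReal.toReal_pow, ENNReal.toReal_ofReal h2', ENNReal.toReal_ofReal hq0, ENNReal.toReal_ofReal e0.le, ENNReal.toReal_ofNat] at this
    exact this
  have hb0 : 0 ≤ B.toReal := ENNReal.toReal_nonneg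
  constructor
  · nlinarith
  · nlinarith

lemma Prof.deriv_QQ {α ε : ℝ} {w p} (h : Prof α ε w p) {q : ℝ} (hq : 0 < q) :
    HasDerivAt (QQ p) (Q1 p q) q := by
  have := hasDerivAt_integral_of_dominated_loc_of_deriv_le (μ := muP p) (𝕜 := ℝ)
    (F := fun q x => 1 - exp (-(q*x))) (F' := fun q x => x * exp (-(q*x))) (x₀ := q) (s := Ioi 0)
    (bound := fun x => x)
    (Ioi_mem_nhds hq) (Eventually.of_forall fun q => by fun_prop) (h.int_Q hq.le) (by fun_prop)
    ?_ h.int_id ?_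
  · exact this.2
  · filter_upwards [ae_muP p] with x hx
    intro q hq
    have hq : 0 < q := hq
    rw [Real.norm_of_nonneg (by positivity)]
    have := one_sub_exp_nonneg (t := q*x) (by positivity)
    nlinarith
  · filter_upwards [ae_muP p] with x hx
    intro q hq
    have h1 : HasDerivAt (fun q => exp (-(q*x))) (exp (-(q*x)) * (-(1*x))) q :=
      (((hasDerivAt_id q).mul_const x).neg).exp
    refine HasDerivAt.congr_deriv (h1.const_sub 1) ?_
    ring

lemma Prof.lim_g {α ε : ℝ} {w p} (h : Prof α ε w p) :
    Tendsto (fun q => QQ p q / q) (nhdsWithin 0 (Ioi 0)) (nhds 1) := by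
  rw [← h.integral_id]
  have : ∀ q, QQ p q / q = ∫ x, (1 - exp (-(q*x)))/q ∂muP p := by
    intro q; unfold QQ; rw [integral_div]
  simp_rw [this]
  apply tendsto_integral_filter_of_dominated_convergence (bound := fun x => x)
  · exact Eventually.of_forall fun q => by fun_prop
  · filter_upwards [self_mem_nhdsWithin] with q hq
    have hq : 0 < q := hq
    filter_upwards [ae_muP p] with x hx
    rw [Real.norm_of_nonneg (div_nonneg (one_sub_exp_nonneg (by positivity)) hq.le), div_le_iff₀ hq]
    have := one_sub_exp_le (q*x)
    linarith
  · exact h.int_id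
  · filter_upwards with x
    have h1 : HasDerivAt (fun q => exp (-(q*x))) (exp (-(0*x)) * (-(1*x))) 0 :=
      (((hasDerivAt_id 0).mul_const x).neg).exp
    have h2 := (h1.const_sub 1)
    rw [hasDerivAt_iff_tendsto_slope] at h2
    have h3 := h2.mono_left (nhdsWithin_mono 0 (s := Ioi 0) (fun x (hx : 0 < x) => hx.ne'))
    have e : -(exp (-(0*x)) * (-(1*x))) = x := by simp
    rw [e] at h3
    refine h3.congr ?_
    intro q
    simp [slope_def_field]

lemma Prof.g_bound {α ε : ℝ} {w p} (h : Prof α ε w p) {q : ℝ} (hq : 0 < q) :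
    (QQ p q / q - 1/(1+q))^2 ≤ 4 * ε / (1-α) * q^(1-α) := by
  have a0 := h.a0
  have a1 := h.a1
  have e0 := h.e0
  set C := 4 * ε / (1-α) with hC
  have ha : 0 < 1 - α := by linarith
  let E : ℝ → ℝ := fun q => (QQ p q / q - 1/(1+q))^2 - C * q^(1-α)
  let E' : ℝ → ℝ := fun q => 2 * (QQ p q / q - 1/(1+q)) * ((Q1 p q * q - QQ p q)/q^2 - (-1/(1+q)^2)) - C * ((1-α) * q^(-α))
  have hE : ∀ q ∈ Ioi (0:ℝ), HasDerivAt E (E' q) q := by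
    intro q hq
    have hq : 0 < q := hq
    have h1 : HasDerivAt (fun q => QQ p q / q) ((Q1 p q * q - QQ p q)/q^2) q := by
      refine HasDerivAt.congr_deriv ((h.deriv_QQ hq).div (hasDerivAt_id q) hq.ne') ?_
      simp
    have h2 : HasDerivAt (fun q:ℝ => 1/(1+q)) (-1/(1+q)^2) q := by
      have : HasDerivAt (fun q:ℝ => 1+q) 1 q := (hasDerivAt_id q).const_add 1
      refine HasDerivAt.congr_deriv ((hasDerivAt_const q (1:ℝ)).div this (by positivity)) ?_
      simp
    have h3 : HasDerivAt (fun q:ℝ => C * q^(1-α)) (C * ((1-α) * q^(-α))) q := by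
      have := (Real.hasDerivAt_rpow_const (x := q) (p := 1-α) (Or.inl hq.ne')).const_mul C
      refine HasDerivAt.congr_deriv this ?_
      congr 3; ring
    refine HasDerivAt.congr_deriv (((h1.sub h2).pow 2).sub h3) ?_
    simp [E']
  have hneg : ∀ q ∈ Ioi (0:ℝ), E' q ≤ 0 := by
    intro q hq
    have hq : 0 < q := hq
    obtain ⟨r1, r2⟩ := h.ric hq
    simp only [E']
    have hCa : C * ((1-α) * q^(-α)) = 4 * ε * q^(-α) := by
      rw [hC]; field_simp
    rw [hCa]
    obtain ⟨r, hr⟩ : ∃ r, r = (QQ p q - q * Q1 p q - (QQ p q)^2)/q^2 := ⟨_, rfl⟩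
    have hr0 : 0 ≤ r := by rw [hr]; apply div_nonneg _ (by positivity); linarith
    have hr1 : r ≤ 2 * ε * q^(-α) := by
      rw [hr, div_le_iff₀ (by positivity)]
      have : q^(-α) * q^2 = q^(2-α) := by
        rw [← Real.rpow_natCast, ← Real.rpow_add hq]; congr 1; push_cast; ring
      rw [mul_assoc, this]; linarith
    have hg' : (Q1 p q * q - QQ p q)/q^2 = -((QQ p q / q)^2 + r) := by
      rw [hr]; field_simp; ring
    have hh' : -1/(1+q)^2 = -(1/(1+q))^2 := by field_simp
    rw [hg', hh']
    have hg0 : 0 ≤ QQ p q / q := div_nonneg (QQ_nonneg p hq.le) hq.le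
    have hg1 : QQ p q / q ≤ 1 := by rw [div_le_one hq]; exact h.QQ_le hq.le
    have hh0 : 0 ≤ 1/(1+q) := by positivity
    have hh1 : 1/(1+q) ≤ 1 := by rw [div_le_one (by positivity)]; linarith
    generalize QQ p q / q = g at *
    generalize 1/(1+q) = k at *
    have : 2 * (g - k) * (-(g^2 + r) - -k^2) = -2*(g+k)*(g-k)^2 - 2*(g-k)*r := by ring
    rw [this]
    have h1 : 0 ≤ (g+k)*(g-k)^2 := by positivity
    have h2 : -(g-k)*r ≤ r := by nlinarith
    nlinarith
  have hanti : AntitoneOn E (Ioi 0) := by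
    apply antitoneOn_of_deriv_nonpos (convex_Ioi 0)
    · intro x hx; exact (hE x hx).continuousAt.continuousWithinAt
    · rw [interior_Ioi]; intro x hx; exact (hE x hx).differentiableAt.differentiableWithinAt
    · rw [interior_Ioi]; intro x hx; rw [(hE x hx).deriv]; exact hneg x hx
  have hlim : Tendsto E (nhdsWithin 0 (Ioi 0)) (nhds 0) := by
    have t1 : Tendsto (fun q:ℝ => 1/(1+q)) (nhdsWithin 0 (Ioi 0)) (nhds 1) := by
      have : ContinuousAt (fun q:ℝ => 1/(1+q)) 0 := by
        apply ContinuousAt.div (by fun_prop) (by fun_prop); simp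
      have := this.tendsto.mono_left (nhdsWithin_le_nhds (s := Ioi 0))
      simpa using this
    have t2 : Tendsto (fun q:ℝ => C * q^(1-α)) (nhdsWithin 0 (Ioi 0)) (nhds 0) := by
      have : ContinuousAt (fun q:ℝ => C * q^(1-α)) 0 :=
        (Real.continuousAt_rpow_const 0 (1-α) (Or.inr ha.le)).const_mul C
      have := this.tendsto.mono_left (nhdsWithin_le_nhds (s := Ioi 0))
      simpa [Real.zero_rpow ha.ne'] using this
    have := ((h.lim_g.sub t1).pow 2).sub t2
    simpa [E] using this
  have : E q ≤ 0 := by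
    apply ge_of_tendsto hlim
    have : Ioo 0 q ∈ nhdsWithin (0:ℝ) (Ioi 0) := Ioo_mem_nhdsGT hq
    filter_upwards [this] with a ha
    exact hanti ha.1 hq ha.2.le
  simp only [E] at this
  linarith

lemma psi2_int {b y z : ℝ} (hb : 0 < b) (hy : 0 < y) (hz : 0 < z) :
    ∫⁻ x in Ioo y (y+z), ENNReal.ofReal (x ^ (-1-b)) =
    ENNReal.ofReal ((y^(-b) - (y+z)^(-b))/b) := by
  rw [lint_Ioo (F := fun x => - (x^(-b)/b)) (by linarith)]
  · congr 1; ring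
  · intro x hx
    have hx0 : x ≠ 0 := by have := hx.1; intro h; linarith
    have := ((Real.hasDerivAt_rpow_const (x := x) (p := -b) (Or.inl hx0)).div_const b).neg
    refine HasDerivAt.congr_deriv this ?_
    rw [show -b-1 = -1-b by ring]
    field_simp
  · intro x hx
    have hx0 : x ≠ 0 := by have := hx.1; intro h; linarith
    exact (Real.continuousAt_rpow_const x _ (Or.inl hx0)).continuousWithinAt
  · intro x hx
    have : 0 ≤ x := by have := hx.1; linarith
    positivity

lemma negmom_aux {α ε : ℝ} {w p} (h : Prof α ε w p) {x0 n δ : ℝ} (hx0 : 0 < x0)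
    (hn : ENNReal.ofReal n ≤ muP p (Ioi x0)) (hn2 : 1 + α < 2 * n) (hδ : 0 < δ) :
    ∫⁻ x in Ioi δ, ENNReal.ofReal (x ^ (-α)) ∂muP p ≤ ENNReal.ofReal (2 * x0^(-α) / (2*n-1-α)) := by
  have a0 := h.a0
  have a1 := h.a1
  have hfin := h.fin
  set μ := muP p with hμ
  set m := ∫⁻ x in Ioi δ, ENNReal.ofReal (x ^ (-α)) ∂μ with hm
  have hmf : m ≠ ∞ := by
    have : m ≤ ∫⁻ x in Ioi δ, ENNReal.ofReal (δ^(-α)) ∂μ := by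
      apply setLIntegral_mono (by fun_prop)
      intro x hx
      apply ENNReal.ofReal_le_ofReal
      exact Real.rpow_le_rpow_of_nonpos hδ (le_of_lt hx) (by linarith)
    refine ne_top_of_le_ne_top ?_ this
    rw [lintegral_const]
    finiteness
  set g : ℝ → ℝ → ℝ≥0∞ := fun y z => ENNReal.ofReal (y * 2 * ((y^(-(1+α)) - (y+z)^(-(1+α)))/(1+α))) with hg
  have h1 : ∫⁻ y in Ioi δ, ∫⁻ z in Ioi x0, g y z ∂μ ∂μ ≤ m := by
    have hw := weak_form h (ψ := (Ioi δ).indicator (fun x => ENNReal.ofReal (x ^ (-1-(1+α)))))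
      (Measurable.indicator (by fun_prop) measurableSet_Ioi)
    have e1 : m = ∫⁻ x, (Ioi δ).indicator (fun x => ENNReal.ofReal (x ^ (-1-(1+α)))) x * ENNReal.ofReal (x^2) ∂μ := by
      rw [hm, ← lintegral_indicator measurableSet_Ioi]
      congr 1; ext x
      by_cases hx : x ∈ Ioi δ
      · have hx' : 0 < x := hδ.trans hx
        simp only [hx, indicator_of_mem]
        rw [← ENNReal.ofReal_mul (by positivity), ← Real.rpow_natCast x 2, ← Real.rpow_add hx']
        congr 2; push_cast; ring
      · simp [hx]
    rw [e1, hw]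
    calc ∫⁻ y in Ioi δ, ∫⁻ z in Ioi x0, g y z ∂μ ∂μ ≤ ∫⁻ y in Ioi δ, ∫⁻ z in Ioi x0,
          (ENNReal.ofReal y * Kk ε w y z * ∫⁻ x in Ioo y (y+z), (Ioi δ).indicator (fun x => ENNReal.ofReal (x ^ (-1-(1+α)))) x) ∂μ ∂μ := by
          apply lintegral_mono_ae
          filter_upwards [ae_restrict_mem measurableSet_Ioi] with y hy
          apply lintegral_mono_ae
          filter_upwards [ae_restrict_mem measurableSet_Ioi] with z hz
          have hy : δ < y := hy
          have hz0 : 0 < z := hx0.trans hz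
          have hy0 : 0 < y := hδ.trans hy
          have e2 : ∫⁻ x in Ioo y (y+z), (Ioi δ).indicator (fun x => ENNReal.ofReal (x ^ (-1-(1+α)))) x =
            ∫⁻ x in Ioo y (y+z), ENNReal.ofReal (x ^ (-1-(1+α))) := by
            apply setLIntegral_congr_fun measurableSet_Ioo
            intro x hx
            have : x ∈ Ioi δ := hy.trans hx.1
            simp [this]
          rw [e2, psi2_int (by linarith) hy0 hz0, hg]
          simp only
          rw [ENNReal.ofReal_mul (by positivity), ENNReal.ofReal_mul (by positivity)]
          gcongr
          unfold Kk
          simp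
      _ ≤ ∫⁻ y in Ioi δ, ∫⁻ z,
          (ENNReal.ofReal y * Kk ε w y z * ∫⁻ x in Ioo y (y+z), (Ioi δ).indicator (fun x => ENNReal.ofReal (x ^ (-1-(1+α)))) x) ∂μ ∂μ := by
          apply lintegral_mono
          intro y
          exact setLIntegral_le_lintegral _ _
      _ ≤ _ := setLIntegral_le_lintegral _ _
  have h2 : ∫⁻ y in Ioi δ, ∫⁻ z in Ioi x0, ENNReal.ofReal 2 * ENNReal.ofReal (y^(-α)) ∂μ ∂μ ≤
     ∫⁻ y in Ioi δ, ∫⁻ z in Ioi x0, (ENNReal.ofReal (1+α) * g y z + ENNReal.ofReal (2 * x0^(-α))) ∂μ ∂μ := by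
    apply lintegral_mono_ae
    filter_upwards [ae_restrict_mem measurableSet_Ioi] with y hy
    apply lintegral_mono_ae
    filter_upwards [ae_restrict_mem measurableSet_Ioi] with z hz
    have hy : δ < y := hy
    have hz : x0 < z := hz
    have hz0 : 0 < z := hx0.trans hz
    have hy0 : 0 < y := hδ.trans hy
    rw [hg]
    simp only
    have hmon : (y+z)^(-(1+α)) ≤ y^(-(1+α)) :=
      Real.rpow_le_rpow_of_nonpos hy0 (by linarith) (by linarith)
    rw [← ENNReal.ofReal_mul (by positivity), ← ENNReal.ofReal_mul (by positivity), ← ENNReal.ofReal_add _ (by positivity)]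
    swap
    · have : 0 ≤ y^(-(1+α)) - (y+z)^(-(1+α)) := by linarith
      positivity
    apply ENNReal.ofReal_le_ofReal
    have e3 : (1+α) * (y * 2 * ((y^(-(1+α)) - (y+z)^(-(1+α)))/(1+α))) = 2 * (y * y^(-(1+α))) - 2 * (y * (y+z)^(-(1+α))) := by
      field_simp
    have e4 : y * y^(-(1+α)) = y^(-α) := by
      nth_rewrite 1 [← Real.rpow_one y]
      rw [← Real.rpow_add hy0]; congr 1; ring
    have e5 : y * (y+z)^(-(1+α)) ≤ x0^(-α) := by
      calc y * (y+z)^(-(1+α)) ≤ (y+z)^(1:ℝ) * (y+z)^(-(1+α)) := by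
            rw [Real.rpow_one]; gcongr; linarith
        _ = (y+z)^(-α) := by rw [← Real.rpow_add (by linarith)]; congr 1; ring
        _ ≤ x0^(-α) := Real.rpow_le_rpow_of_nonpos hx0 (by linarith) (by linarith)
    rw [e3, e4]
    linarith
  have h3 : ∫⁻ y in Ioi δ, ∫⁻ z in Ioi x0, ENNReal.ofReal 2 * ENNReal.ofReal (y^(-α)) ∂μ ∂μ = ENNReal.ofReal 2 * m * μ (Ioi x0) := by
    simp_rw [setLIntegral_const]
    rw [lintegral_mul_const _ (by fun_prop), lintegral_const_mul _ (by fun_prop)]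
  have h4 : ∫⁻ y in Ioi δ, ∫⁻ z in Ioi x0, (ENNReal.ofReal (1+α) * g y z + ENNReal.ofReal (2 * x0^(-α))) ∂μ ∂μ ≤
      ENNReal.ofReal (1+α) * m + ENNReal.ofReal (2 * x0^(-α)) := by
    have gm : Measurable (fun q : ℝ × ℝ => g q.1 q.2) := by rw [hg]; fun_prop
    have gm1 : ∀ y, Measurable (fun z => g y z) := fun y => gm.comp (f := fun z => (y,z)) (by fun_prop)
    have gm2 : Measurable (fun y => ∫⁻ z in Ioi x0, g y z ∂μ) := Measurable.lintegral_prod_right' gm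
    have : ∀ y, ∫⁻ z in Ioi x0, (ENNReal.ofReal (1+α) * g y z + ENNReal.ofReal (2 * x0^(-α))) ∂μ =
       ENNReal.ofReal (1+α) * ∫⁻ z in Ioi x0, g y z ∂μ + ENNReal.ofReal (2 * x0^(-α)) * μ (Ioi x0) := by
      intro y
      have := gm1 y
      rw [lintegral_add_left (by fun_prop), lintegral_const_mul _ (by fun_prop), setLIntegral_const]
    simp_rw [this]
    rw [lintegral_add_left (by fun_prop), lintegral_const_mul _ (by fun_prop), setLIntegral_const]
    have hle : ∀ s, μ s ≤ 1 := fun s => (measure_mono (subset_univ s)).trans (mass_le_one h)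
    gcongr
    calc _ ≤ ENNReal.ofReal (2 * x0^(-α)) * 1 * 1 := by
          gcongr
          · exact hle _
          · exact hle _
      _ = _ := by simp
  have h5 : ENNReal.ofReal 2 * m * ENNReal.ofReal n ≤ ENNReal.ofReal (1+α) * m + ENNReal.ofReal (2 * x0^(-α)) := by
    calc _ ≤ ENNReal.ofReal 2 * m * μ (Ioi x0) := by gcongr
      _ ≤ _ := by rw [← h3]; exact h2.trans h4
  clear_value m
  have hn0 : 0 ≤ n := by linarith
  obtain ⟨r, hr0, rfl⟩ : ∃ r : ℝ, 0 ≤ r ∧ m = ENNReal.ofReal r := ⟨m.toReal, ENNReal.toReal_nonneg, (ENNReal.ofReal_toReal hmf).symm⟩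
  rw [← ENNReal.ofReal_mul (by positivity), ← ENNReal.ofReal_mul (by positivity), ← ENNReal.ofReal_mul (by positivity),
    ← ENNReal.ofReal_add (by positivity) (by positivity), ENNReal.ofReal_le_ofReal_iff (by positivity)] at h5
  apply ENNReal.ofReal_le_ofReal
  rw [le_div_iff₀ (by linarith)]
  linarith

lemma negmom {α ε : ℝ} {w p} (h : Prof α ε w p) {x0 n : ℝ} (hx0 : 0 < x0)
    (hn : ENNReal.ofReal n ≤ muP p (Ioi x0)) (hn2 : 1 + α < 2 * n) :
    ∫⁻ x, ENNReal.ofReal (x ^ (-α)) ∂muP p ≤ ENNReal.ofReal (2 * x0^(-α) / (2*n-1-α)) := by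
  have h1 : Tendsto (fun k : ℕ => ∫⁻ x, (Ioi (1/((k:ℝ)+1))).indicator (fun x => ENNReal.ofReal (x ^ (-α))) x ∂muP p) atTop
      (nhds (∫⁻ x, ENNReal.ofReal (x ^ (-α)) ∂muP p)) := by
    apply lintegral_tendsto_of_tendsto_of_monotone
    · intro k; exact (Measurable.indicator (by fun_prop) measurableSet_Ioi).aemeasurable
    · filter_upwards with x
      intro k l hkl
      have : (k:ℝ) ≤ l := by exact_mod_cast hkl
      apply indicator_le_indicator_of_subset _ (fun _ => zero_le)
      apply Ioi_subset_Ioi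
      gcongr
    · filter_upwards [ae_muP p] with x hx
      apply tendsto_const_nhds.congr'
      have : ∀ᶠ k : ℕ in atTop, 1/((k:ℝ)+1) < x :=
        (tendsto_one_div_add_atTop_nhds_zero_nat (𝕜 := ℝ)).eventually_lt_const hx
      filter_upwards [this] with k hk
      rw [indicator_of_mem]; exact hk
  refine le_of_tendsto' h1 (fun k => ?_)
  rw [lintegral_indicator measurableSet_Ioi]
  exact negmom_aux h hx0 hn hn2 (by positivity)

noncomputable def FF (p : ℝ → ℝ≥0∞) (x : ℝ) : ℝ≥0∞ :=
  ∫⁻ y, ∫⁻ z, ENNReal.ofReal y * Ind y z x ∂muP p ∂muP p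
noncomputable def TT (w : ℝ → ℝ → ℝ≥0∞) (p : ℝ → ℝ≥0∞) (x : ℝ) : ℝ≥0∞ :=
  ∫⁻ y, ∫⁻ z, ENNReal.ofReal y * w y z * Ind y z x ∂muP p ∂muP p

lemma Ind_m2 (x : ℝ) : Measurable (fun q : ℝ × ℝ => Ind q.1 q.2 x) :=
  Ind_meas' (by fun_prop) (by fun_prop) (by fun_prop)

lemma II_split {α ε : ℝ} {w} (hw : WOk α w) (p : ℝ → ℝ≥0∞) (x : ℝ) :
    II ε w p x = 2 * FF p x + ENNReal.ofReal ε * TT w p x := by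
  unfold II FF TT
  have iM := Ind_m2 x
  have iM1 : ∀ y, Measurable (fun z => Ind y z x) := fun y => iM.comp (f := fun z => (y,z)) (by fun_prop)
  have wm := hw.wm
  have wM : Measurable (fun q : ℝ × ℝ => w q.1 q.2) := wm
  have wM1 : ∀ y, Measurable (fun z => w y z) := fun y => wM.comp (f := fun z => (y,z)) (by fun_prop)
  have m1 : Measurable (fun y => ∫⁻ z, ENNReal.ofReal y * Ind y z x ∂muP p) :=
    Measurable.lintegral_prod_right' (f := fun q : ℝ × ℝ => ENNReal.ofReal q.1 * Ind q.1 q.2 x) (by fun_prop)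
  have m2 : Measurable (fun y => ∫⁻ z, ENNReal.ofReal y * w y z * Ind y z x ∂muP p) :=
    Measurable.lintegral_prod_right' (f := fun q : ℝ × ℝ => ENNReal.ofReal q.1 * w q.1 q.2 * Ind q.1 q.2 x) (by fun_prop)
  rw [← lintegral_const_mul _ m1, ← lintegral_const_mul _ m2, ← lintegral_add_left (by fun_prop)]
  congr 1; ext y
  have i1 := iM1 y
  have w1 := wM1 y
  rw [← lintegral_const_mul _ (by fun_prop), ← lintegral_const_mul _ (by fun_prop), ← lintegral_add_left (by fun_prop)]
  congr 1; ext z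
  unfold Kk; ring

lemma yInd_le (y z x : ℝ) : ENNReal.ofReal y * Ind y z x ≤ ENNReal.ofReal x := by
  unfold Ind
  by_cases hx : x ∈ Ioo y (y+z)
  · simp only [hx, indicator_of_mem, Pi.one_apply, mul_one]
    exact ENNReal.ofReal_le_ofReal hx.1.le
  · simp [hx]

lemma FF_le {α ε : ℝ} {w p} (h : Prof α ε w p) (x : ℝ) : FF p x ≤ ENNReal.ofReal x := by
  have hle := mass_le_one h
  calc FF p x ≤ ∫⁻ y, ∫⁻ z, ENNReal.ofReal x ∂muP p ∂muP p := by
        apply lintegral_mono; intro y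
        apply lintegral_mono; intro z
        exact yInd_le y z x
    _ = ENNReal.ofReal x * muP p univ * muP p univ := by simp
    _ ≤ ENNReal.ofReal x * 1 * 1 := by gcongr
    _ = _ := by simp

lemma WW_le {α ε : ℝ} {w p} (h : Prof α ε w p) :
    ∫⁻ y, ∫⁻ z, w y z ∂muP p ∂muP p ≤ 4 * ∫⁻ x, ENNReal.ofReal (x ^ (-α)) ∂muP p := by
  set m := ∫⁻ x, ENNReal.ofReal (x ^ (-α)) ∂muP p with hm
  have hp := mom_pos h h.a0.le h.a1.le
  set P := ∫⁻ x, ENNReal.ofReal (x ^ α) ∂muP p with hP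
  calc _ ≤ ∫⁻ y, ∫⁻ z, (ENNReal.ofReal (y^α) * ENNReal.ofReal (z^(-α)) + ENNReal.ofReal (y^(-α)) * ENNReal.ofReal (z^α)) ∂muP p ∂muP p := by
        apply lintegral_mono_ae
        filter_upwards [ae_muP p] with y hy
        apply lintegral_mono_ae
        filter_upwards [ae_muP p] with z hz
        refine (h.wle y z hy hz).trans (le_of_eq ?_)
        rw [← ENNReal.ofReal_mul (by positivity), ← ENNReal.ofReal_mul (by positivity),
          ← ENNReal.ofReal_add (by positivity) (by positivity)]
        congr 1
        rw [Real.div_rpow hy.le hz.le, Real.div_rpow hz.le hy.le, Real.rpow_neg hy.le, Real.rpow_neg hz.le]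
        field_simp
    _ = P * m + m * P := by
        have : ∀ y, ∫⁻ z, (ENNReal.ofReal (y^α) * ENNReal.ofReal (z^(-α)) + ENNReal.ofReal (y^(-α)) * ENNReal.ofReal (z^α)) ∂muP p
          = ENNReal.ofReal (y^α) * m + ENNReal.ofReal (y^(-α)) * P := by
          intro y
          rw [lintegral_add_left (by fun_prop), lintegral_const_mul _ (by fun_prop), lintegral_const_mul _ (by fun_prop)]
        simp_rw [this]
        rw [lintegral_add_left (by fun_prop), lintegral_mul_const _ (by fun_prop), lintegral_mul_const _ (by fun_prop)]
    _ ≤ 2 * m + m * 2 := by gcongr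
    _ = 4 * m := by ring

lemma TT_le {α ε : ℝ} {w p} (h : Prof α ε w p) (x : ℝ) :
    TT w p x ≤ ENNReal.ofReal x * (4 * ∫⁻ x, ENNReal.ofReal (x ^ (-α)) ∂muP p) := by
  have wM1 : ∀ y, Measurable (fun z => w y z) := fun y => h.wm.comp (f := fun z => (y,z)) (by fun_prop)
  calc TT w p x ≤ ∫⁻ y, ∫⁻ z, ENNReal.ofReal x * w y z ∂muP p ∂muP p := by
        apply lintegral_mono; intro y
        apply lintegral_mono; intro z
        simp only
        calc _ = (ENNReal.ofReal y * Ind y z x) * w y z := by ring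
          _ ≤ _ := by gcongr; exact yInd_le y z x
    _ = ENNReal.ofReal x * ∫⁻ y, ∫⁻ z, w y z ∂muP p ∂muP p := by
        rw [← lintegral_const_mul]
        · congr 1; ext y; rw [lintegral_const_mul _ (wM1 y)]
        · exact Measurable.lintegral_prod_right' (f := fun q : ℝ × ℝ => w q.1 q.2) h.wm
    _ ≤ _ := by gcongr; exact WW_le h

lemma dens_le {α ε : ℝ} {w p} (h : Prof α ε w p) {A : ℝ≥0∞}
    (hA : ∫⁻ x, ENNReal.ofReal (x ^ (-α)) ∂muP p ≤ A) :
    ∀ᵐ x ∂(volume.restrict (Ioi (0:ℝ))), p x * ENNReal.ofReal x ≤ 2 + ENNReal.ofReal ε * (4 * A) := by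
  filter_upwards [h.eqn, ae_restrict_mem measurableSet_Ioi] with x hx hx0
  have hx0 : 0 < x := hx0
  rw [II_split h.toWOk] at hx
  have h1 : ENNReal.ofReal (x^2) * p x ≤ ENNReal.ofReal x * (2 + ENNReal.ofReal ε * (4 * A)) := by
    rw [hx]
    calc _ ≤ 2 * ENNReal.ofReal x + ENNReal.ofReal ε * (ENNReal.ofReal x * (4 * A)) := by
          gcongr
          · exact FF_le h x
          · refine (TT_le h x).trans ?_
            gcongr
      _ = _ := by ring
  rw [sq, ENNReal.ofReal_mul hx0.le, mul_assoc] at h1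
  have hne : ENNReal.ofReal x ≠ 0 := by simpa using hx0
  rw [mul_comm]
  exact (ENNReal.mul_le_mul_iff_right hne ENNReal.ofReal_ne_top).mp h1

lemma FF_eq (p : ℝ → ℝ≥0∞) (x : ℝ) :
    FF p x = ∫⁻ y in Iio x, ENNReal.ofReal y * muP p (Ioi (x-y)) ∂muP p := by
  unfold FF
  rw [← lintegral_indicator measurableSet_Iio]
  congr 1; ext y
  have iM1 : Measurable (fun z => Ind y z x) := (Ind_m2 x).comp (f := fun z => (y,z)) (by fun_prop)
  by_cases hy : y ∈ Iio x
  · rw [indicator_of_mem hy, lintegral_const_mul _ iM1]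
    congr 1
    have : ∀ z, Ind y z x = (Ioi (x-y)).indicator 1 z := by
      intro z
      unfold Ind
      have hy : y < x := hy
      simp only [indicator, mem_Ioo, mem_Ioi, sub_lt_iff_lt_add', hy, true_and, Pi.one_apply]
    simp_rw [this]
    rw [lintegral_indicator_one measurableSet_Ioi]
  · rw [indicator_of_notMem hy]
    have : ∀ z, Ind y z x = 0 := by
      intro z
      unfold Ind
      rw [indicator_of_notMem]
      intro h; exact hy h.1
    simp [this]

noncomputable def dd (p : ℝ → ℝ≥0∞) (x : ℝ) : ℝ≥0∞ :=
  ∫⁻ y in Ioo 0 x, ENNReal.ofReal |(muP p).real (Ioi (x-y)) - exp (-(x-y))|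

lemma N_meas (p : ℝ → ℝ≥0∞) (x : ℝ) [IsFiniteMeasure (muP p)] : Measurable (fun y => (muP p).real (Ioi (x-y))) := by
  have : Monotone (fun y => (muP p).real (Ioi (x-y))) := by
    intro a b hab
    exact measureReal_mono (Ioi_subset_Ioi (by linarith))
  exact this.measurable

lemma final_est {α ε : ℝ} {w p} (h : Prof α ε w p) {C : ℝ≥0∞} (hC : C ≠ ∞)
    (hd : ∀ᵐ x ∂(volume.restrict (Ioi (0:ℝ))), p x * ENNReal.ofReal x ≤ C) (x : ℝ) :
    |(FF p x).toReal - ∫ y in Iio x, y * exp (-(x-y)) ∂muP p| ≤ (C * dd p x).toReal := by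
  have := h.fin
  have hN := N_meas p x
  set μ := muP p with hμ
  have hN0 : ∀ y, 0 ≤ μ.real (Ioi (x-y)) := fun y => measureReal_nonneg
  have hN1 : ∀ y, μ.real (Ioi (x-y)) ≤ 1 := by
    intro y
    apply ENNReal.toReal_le_of_le_ofReal (by simp)
    rw [ENNReal.ofReal_one]
    exact (measure_mono (subset_univ _)).trans (mass_le_one h)
  have hpos : ∀ᵐ y ∂(μ.restrict (Iio x)), 0 < y := ae_restrict_of_ae (ae_muP p)
  have e1 : (FF p x).toReal = ∫ y in Iio x, y * μ.real (Ioi (x-y)) ∂μ := by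
    rw [FF_eq, integral_eq_lintegral_of_nonneg_ae]
    · congr 1
      apply lintegral_congr_ae
      filter_upwards [hpos] with y hy
      rw [ENNReal.ofReal_mul hy.le, ofReal_measureReal]
    · filter_upwards [hpos] with y hy
      exact mul_nonneg hy.le (hN0 y)
    · exact (measurable_id.mul hN).aestronglyMeasurable
  have i1 : Integrable (fun y => y * μ.real (Ioi (x-y))) (μ.restrict (Iio x)) := by
    refine (h.int_id.restrict (s := Iio x)).mono' (measurable_id.mul hN).aestronglyMeasurable ?_
    filter_upwards [hpos] with y hy
    rw [Real.norm_of_nonneg (mul_nonneg hy.le (hN0 y))]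
    have := hN1 y
    nlinarith
  have i2 : Integrable (fun y => y * exp (-(x-y))) (μ.restrict (Iio x)) := by
    refine (h.int_id.restrict (s := Iio x)).mono' (by fun_prop) ?_
    filter_upwards [hpos, ae_restrict_mem measurableSet_Iio] with y hy hyx
    rw [Real.norm_of_nonneg (by positivity)]
    have hyx : y < x := hyx
    have := one_sub_exp_nonneg (t := x-y) (by linarith)
    nlinarith
  rw [e1, ← integral_sub i1 i2]
  rw [← Real.norm_eq_abs]
  refine (norm_integral_le_lintegral_norm _).trans ?_
  apply ENNReal.toReal_mono
  · apply ENNReal.mul_ne_top hC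
    have : dd p x ≤ ∫⁻ y in Ioo 0 x, 1 := by
      apply setLIntegral_mono (by fun_prop)
      intro y hy
      rw [← ENNReal.ofReal_one]
      apply ENNReal.ofReal_le_ofReal
      have h1 := one_sub_exp_nonneg (t := x-y) (by linarith [hy.2])
      have h2 := Real.exp_pos (-(x-y))
      rw [abs_le]; constructor <;> linarith [hN0 y, hN1 y]
    refine ne_top_of_le_ne_top ?_ this
    simp
  · have hm : Measurable (fun y => ENNReal.ofReal |μ.real (Ioi (x-y)) - exp (-(x-y))|) := by fun_prop
    calc _ = ∫⁻ y, (Iio x).indicator (fun y => ENNReal.ofReal (|y| * |μ.real (Ioi (x-y)) - exp (-(x-y))|)) y ∂μ := by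
          rw [lintegral_indicator measurableSet_Iio]
          congr 1; ext y
          rw [← mul_sub, norm_mul]; rfl
      _ = ∫⁻ y in Ioi 0, p y * (Iio x).indicator (fun y => ENNReal.ofReal (|y| * |μ.real (Ioi (x-y)) - exp (-(x-y))|)) y :=
          lint_muP h.pm (Measurable.indicator (by fun_prop) measurableSet_Iio)
      _ ≤ ∫⁻ y in Ioi 0, (Iio x).indicator (fun y => C * ENNReal.ofReal (|μ.real (Ioi (x-y)) - exp (-(x-y))|)) y := by
          apply lintegral_mono_ae
          filter_upwards [hd, ae_restrict_mem measurableSet_Ioi] with y hy hy0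
          have hy0 : 0 < y := hy0
          by_cases hyx : y ∈ Iio x
          · simp only [indicator_of_mem hyx]
            rw [ENNReal.ofReal_mul (abs_nonneg y), abs_of_pos hy0, ← mul_assoc]
            gcongr
          · simp [indicator_of_notMem hyx]
      _ = C * dd p x := by
          rw [setLIntegral_indicator measurableSet_Iio, lintegral_const_mul _ hm]
          congr 2
          rw [Iio_inter_Ioi]

lemma exp_mem {x : ℝ} (hx : 0 < x) : exp (-x) ∈ Icc (0:ℝ) 1 :=
  ⟨(Real.exp_pos _).le, by rw [Real.exp_le_one_iff]; linarith⟩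

lemma integrable_F {μ : Measure ℝ} [IsFiniteMeasure μ] (hμ : ∀ᵐ x ∂μ, 0 < x) {F : ℝ → ℝ}
    (hF : ContinuousOn F (Icc 0 1)) (hFm : Measurable F) : Integrable (fun x => F (exp (-x))) μ := by
  obtain ⟨C, hC⟩ := isCompact_Icc.exists_bound_of_continuousOn hF
  refine Integrable.of_bound (hFm.comp (by fun_prop)).aestronglyMeasurable C ?_
  filter_upwards [hμ] with x hx
  exact hC _ (exp_mem hx)

lemma poly_conv {μ : ℕ → Measure ℝ} {l : Measure ℝ} [∀ k, IsFiniteMeasure (μ k)] [IsFiniteMeasure l]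
    (hμ : ∀ k, ∀ᵐ x ∂(μ k), 0 < x) (hl : ∀ᵐ x ∂l, 0 < x)
    (hm : ∀ n : ℕ, Tendsto (fun k => ∫ x, (exp (-x))^n ∂(μ k)) atTop (nhds (∫ x, (exp (-x))^n ∂l)))
    (P : Polynomial ℝ) :
    Tendsto (fun k => ∫ x, P.eval (exp (-x)) ∂(μ k)) atTop (nhds (∫ x, P.eval (exp (-x)) ∂l)) := by
  induction P using Polynomial.induction_on' with
  | add P R hP hR =>
    have e : ∀ ν : Measure ℝ, IsFiniteMeasure ν → (∀ᵐ x ∂ν, 0 < x) →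
        ∫ x, (P + R).eval (exp (-x)) ∂ν = ∫ x, P.eval (exp (-x)) ∂ν + ∫ x, R.eval (exp (-x)) ∂ν := by
      intro ν _ hν
      simp_rw [Polynomial.eval_add]
      exact integral_add (integrable_F hν P.continuous.continuousOn P.continuous.measurable)
        (integrable_F hν R.continuous.continuousOn R.continuous.measurable)
    rw [e l inferInstance hl]
    simp_rw [fun k => e (μ k) inferInstance (hμ k)]
    exact hP.add hR
  | monomial n a =>
    simp_rw [Polynomial.eval_monomial, integral_const_mul]
    exact (hm n).const_mul a

lemma cont_conv {μ : ℕ → Measure ℝ} {l : Measure ℝ} [∀ k, IsFiniteMeasure (μ k)] [IsFiniteMeasure l]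
    (hμ : ∀ k, ∀ᵐ x ∂(μ k), 0 < x) (hl : ∀ᵐ x ∂l, 0 < x)
    (hμ1 : ∀ k, (μ k).real univ ≤ 1) (hl1 : l.real univ ≤ 1)
    (hm : ∀ n : ℕ, Tendsto (fun k => ∫ x, (exp (-x))^n ∂(μ k)) atTop (nhds (∫ x, (exp (-x))^n ∂l)))
    {F : ℝ → ℝ} (hF : ContinuousOn F (Icc 0 1)) (hFm : Measurable F) :
    Tendsto (fun k => ∫ x, F (exp (-x)) ∂(μ k)) atTop (nhds (∫ x, F (exp (-x)) ∂l)) := by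
  rw [Metric.tendsto_atTop]
  intro η hη
  obtain ⟨P, hP⟩ := exists_polynomial_near_of_continuousOn 0 1 F hF (η/4) (by linarith)
  obtain ⟨K, hK⟩ := (Metric.tendsto_atTop.mp (poly_conv hμ hl hm P)) (η/4) (by linarith)
  refine ⟨K, fun k hk => ?_⟩
  have e : ∀ ν : Measure ℝ, IsFiniteMeasure ν → (∀ᵐ x ∂ν, 0 < x) → ν.real univ ≤ 1 →
      |∫ x, P.eval (exp (-x)) ∂ν - ∫ x, F (exp (-x)) ∂ν| ≤ η/4 := by
    intro ν _ hν hν1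
    rw [← integral_sub (integrable_F hν P.continuous.continuousOn P.continuous.measurable) (integrable_F hν hF hFm)]
    rw [← Real.norm_eq_abs]
    refine (norm_integral_le_of_norm_le_const (C := η/4) ?_).trans ?_
    · filter_upwards [hν] with x hx
      exact (hP _ (exp_mem hx)).le
    · nlinarith
  have h1 := e (μ k) inferInstance (hμ k) (hμ1 k)
  have h2 := e l inferInstance hl hl1
  have h3 := hK k hk
  rw [Real.dist_eq] at *
  rw [abs_lt] at *
  rw [abs_le] at *
  constructor <;> linarith [h1.1, h1.2, h2.1, h2.2, h3.1, h3.2]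

lemma ind_conv {μ : ℕ → Measure ℝ} {l : Measure ℝ} [∀ k, IsFiniteMeasure (μ k)] [IsFiniteMeasure l] [NullSingletonClass l]
    (hμ : ∀ k, ∀ᵐ x ∂(μ k), 0 < x) (hl : ∀ᵐ x ∂l, 0 < x)
    (hμ1 : ∀ k, (μ k).real univ ≤ 1) (hl1 : l.real univ ≤ 1)
    (hm : ∀ n : ℕ, Tendsto (fun k => ∫ x, (exp (-x))^n ∂(μ k)) atTop (nhds (∫ x, (exp (-x))^n ∂l)))
    {F : ℝ → ℝ} (hF : ContinuousOn F (Icc 0 1)) (hFm : Measurable F) (hF0 : ∀ s ∈ Icc (0:ℝ) 1, 0 ≤ F s) (t : ℝ) :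
    Tendsto (fun k => ∫ x in Ioi t, F (exp (-x)) ∂(μ k)) atTop (nhds (∫ x in Ioi t, F (exp (-x)) ∂l)) := by
  obtain ⟨C, hC⟩ := isCompact_Icc.exists_bound_of_continuousOn hF
  set c := exp (-t) with hc
  -- the two cutoffs
  set τ : ℝ → ℕ → ℝ → ℝ := fun b n s => min 1 (max 0 (b + (n:ℝ) * (c - s))) with hτ
  have τ0 : ∀ b n s, 0 ≤ τ b n s := fun b n s => le_min (by norm_num) (le_max_left _ _)
  have τ1 : ∀ b n s, τ b n s ≤ 1 := fun b n s => min_le_left _ _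
  have τc : ∀ b n, Continuous (τ b n) := fun b n => by rw [hτ]; fun_prop
  have hiff : ∀ x, t < x ↔ exp (-x) < c := by
    intro x; rw [hc, Real.exp_lt_exp]; constructor <;> intro h <;> linarith
  have conv : ∀ b n, Tendsto (fun k => ∫ x, F (exp (-x)) * τ b n (exp (-x)) ∂(μ k)) atTop
      (nhds (∫ x, F (exp (-x)) * τ b n (exp (-x)) ∂l)) := fun b n =>
    cont_conv hμ hl hμ1 hl1 hm (F := fun s => F s * τ b n s) (hF.mul (τc b n).continuousOn) (hFm.mul (τc b n).measurable)
  have int1 : ∀ b n, ∀ ν : Measure ℝ, IsFiniteMeasure ν → (∀ᵐ x ∂ν, 0 < x) →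
      Integrable (fun x => F (exp (-x)) * τ b n (exp (-x))) ν := fun b n ν _ hν =>
    integrable_F hν (F := fun s => F s * τ b n s) (hF.mul (τc b n).continuousOn) (hFm.mul (τc b n).measurable)
  have int2 : ∀ ν : Measure ℝ, IsFiniteMeasure ν → (∀ᵐ x ∂ν, 0 < x) →
      Integrable ((Ioi t).indicator (fun x => F (exp (-x)))) ν := fun ν _ hν =>
    (integrable_F hν hF hFm).indicator measurableSet_Ioi
  have lim : ∀ b, Tendsto (fun n => ∫ x, F (exp (-x)) * τ b n (exp (-x)) ∂l) atTop
      (nhds (∫ x, (Ioi t).indicator (fun x => F (exp (-x))) x ∂l)) := by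
    intro b
    apply tendsto_integral_of_dominated_convergence (fun _ => C)
    · intro n; exact (int1 b n l inferInstance hl).aestronglyMeasurable
    · exact integrable_const C
    · intro n
      filter_upwards [hl] with x hx
      rw [norm_mul, Real.norm_of_nonneg (τ0 b n _)]
      have h1 := hC _ (exp_mem hx)
      have h2 := τ1 b n (exp (-x))
      have h3 := τ0 b n (exp (-x))
      have h4 := norm_nonneg (F (exp (-x)))
      nlinarith
    · have hne : ∀ᵐ x ∂l, x ≠ t := by
        rw [ae_iff]; simp
      filter_upwards [hne] with x hx
      rcases lt_or_gt_of_ne hx with hx | hx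
      · have h1 : ¬ (t < x) := by linarith
        rw [indicator_of_notMem (by simpa using h1)]
        have h2 : c < exp (-x) := by rw [hc, Real.exp_lt_exp]; linarith
        have h3 : Tendsto (fun n : ℕ => b + (n:ℝ) * (c - exp (-x))) atTop atBot := by
          apply tendsto_atBot_add_const_left
          exact tendsto_natCast_atTop_atTop.atTop_mul_const_of_neg (by linarith)
        apply tendsto_const_nhds.congr'
        filter_upwards [h3.eventually_le_atBot 0] with n hn
        rw [hτ]; simp [max_eq_left hn]
      · rw [indicator_of_mem (by exact hx)]
        have h2 := (hiff x).mp hx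
        have h3 : Tendsto (fun n : ℕ => b + (n:ℝ) * (c - exp (-x))) atTop atTop := by
          apply tendsto_atTop_add_const_left
          exact tendsto_natCast_atTop_atTop.atTop_mul_const (by linarith)
        apply tendsto_const_nhds.congr'
        filter_upwards [h3.eventually_ge_atTop 1] with n hn
        rw [hτ]
        simp only
        rw [max_eq_right (by linarith), min_eq_left hn, mul_one]
  have lo : ∀ n k, ∫ x, F (exp (-x)) * τ 0 n (exp (-x)) ∂(μ k) ≤ ∫ x, (Ioi t).indicator (fun x => F (exp (-x))) x ∂(μ k) := by
    intro n k
    apply integral_mono_ae (int1 0 n _ inferInstance (hμ k)) (int2 _ inferInstance (hμ k))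
    filter_upwards [hμ k] with x hx
    have h0 := hF0 _ (exp_mem hx)
    by_cases hxt : t < x
    · rw [indicator_of_mem (by exact hxt)]
      exact mul_le_of_le_one_right h0 (τ1 _ _ _)
    · rw [indicator_of_notMem (by simpa using hxt)]
      have h2 : c ≤ exp (-x) := by rw [hc, Real.exp_le_exp]; linarith
      have : 0 + (n:ℝ) * (c - exp (-x)) ≤ 0 := by
        have : (0:ℝ) ≤ n := by positivity
        nlinarith
      rw [hτ]; simp only; rw [max_eq_left this]; simp
  have hi : ∀ n k, ∫ x, (Ioi t).indicator (fun x => F (exp (-x))) x ∂(μ k) ≤ ∫ x, F (exp (-x)) * τ 1 n (exp (-x)) ∂(μ k) := by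
    intro n k
    apply integral_mono_ae (int2 _ inferInstance (hμ k)) (int1 1 n _ inferInstance (hμ k))
    filter_upwards [hμ k] with x hx
    have h0 := hF0 _ (exp_mem hx)
    by_cases hxt : t < x
    · rw [indicator_of_mem (by exact hxt)]
      have h2 := (hiff x).mp hxt
      have : 1 ≤ 1 + (n:ℝ) * (c - exp (-x)) := by
        have : 0 ≤ (n:ℝ) * (c - exp (-x)) := mul_nonneg (by positivity) (by linarith)
        linarith
      rw [hτ]; simp only
      rw [max_eq_right (by linarith), min_eq_left this, mul_one]
    · rw [indicator_of_notMem (by simpa using hxt)]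
      exact mul_nonneg h0 (τ0 _ _ _)
  simp_rw [← integral_indicator measurableSet_Ioi]
  rw [tendsto_order]
  constructor
  · intro a ha
    obtain ⟨n, hn⟩ := ((lim 0).eventually_const_lt ha).exists
    filter_upwards [(conv 0 n).eventually_const_lt hn] with k hk
    exact hk.trans_le (lo n k)
  · intro a ha
    obtain ⟨n, hn⟩ := ((lim 1).eventually_lt_const ha).exists
    filter_upwards [(conv 1 n).eventually_lt_const hn] with k hk
    exact (hi n k).trans_lt hk

noncomputable def lexp : Measure ℝ := muP (fun x => ENNReal.ofReal (exp (-x)))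

instance muP_nsc (p : ℝ → ℝ≥0∞) : NullSingletonClass (muP p) := by unfold muP; infer_instance

lemma lexp_int (s : Set ℝ) (hs : MeasurableSet s) (g : ℝ → ℝ) :
    ∫ x in s, g x ∂lexp = ∫ x in s ∩ Ioi 0, exp (-x) * g x := by
  unfold lexp muP
  rw [setIntegral_withDensity_eq_setIntegral_toReal_smul (by fun_prop) (by simp) _ hs,
    Measure.restrict_restrict hs]
  apply integral_congr_ae
  filter_upwards with x
  rw [ENNReal.toReal_ofReal (exp_pos _).le, smul_eq_mul]

lemma lexp_int' (g : ℝ → ℝ) :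
    ∫ x, g x ∂lexp = ∫ x in Ioi 0, exp (-x) * g x := by
  have := lexp_int univ MeasurableSet.univ g
  simpa using this

instance lexp_fin : IsFiniteMeasure lexp := by
  unfold lexp muP
  exact isFiniteMeasure_withDensity_ofReal (integrableOn_exp_neg_Ioi 0).2

instance lexp_nsc : NullSingletonClass lexp := by unfold lexp; infer_instance

lemma lexp_pos : ∀ᵐ x ∂lexp, 0 < x := ae_muP _

lemma lexp_Ioi {t : ℝ} (ht : 0 ≤ t) : lexp.real (Ioi t) = exp (-t) := by
  have h := lexp_int (Ioi t) measurableSet_Ioi (fun _ => 1)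
  rw [setIntegral_const, smul_eq_mul, mul_one] at h
  rw [h, inter_eq_left.mpr (Ioi_subset_Ioi ht)]
  simpa using integral_exp_neg_Ioi t

lemma lexp_mom (n : ℕ) : ∫ x, (exp (-x))^n ∂lexp = 1/(1+n) := by
  rw [lexp_int']
  have : ∀ x : ℝ, exp (-x) * exp (-x) ^ n = exp ((-(1+n)) * x) := by
    intro x
    rw [← pow_succ', ← Real.exp_nat_mul]; congr 1; push_cast; ring
  simp_rw [this]
  have hn : (0:ℝ) < 1 + n := by positivity
  rw [integral_exp_mul_Ioi (by linarith)]
  simp only [mul_zero, exp_zero]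
  field_simp

lemma lexp_univ : lexp.real univ = 1 := by
  have := lexp_mom 0
  simpa using this

lemma lexp_fin_int {x : ℝ} (hx : 0 < x) : ∫ y in Iio x, y * exp (-(x-y)) ∂lexp = x^2/2 * exp (-x) := by
  rw [lexp_int _ measurableSet_Iio, Iio_inter_Ioi, ← integral_Ioc_eq_integral_Ioo,
    ← intervalIntegral.integral_of_le hx.le]
  have : ∀ y : ℝ, exp (-y) * (y * exp (-(x-y))) = exp (-x) * y := by
    intro y
    have : exp (-x) = exp (-y) * exp (-(x-y)) := by rw [← Real.exp_add]; congr 1; ring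
    rw [this]; ring
  simp_rw [this]
  rw [intervalIntegral.integral_const_mul, integral_id]; ring

section seq
variable {α : ℝ} {ε : ℕ → ℝ} {w : ℝ → ℝ → ℝ≥0∞} {p : ℕ → ℝ → ℝ≥0∞}

lemma seq_QQ (h : ∀ k, Prof α (ε k) w (p k)) (hε : Tendsto ε atTop (nhds 0)) {q : ℝ} (hq : 0 ≤ q) :
    Tendsto (fun k => QQ (p k) q) atTop (nhds (q/(1+q))) := by
  rcases hq.eq_or_lt with rfl | hq
  · simp [QQ]
  have h1 : Tendsto (fun k => 4 * ε k / (1-α) * q^(1-α)) atTop (nhds 0) := by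
    have := ((hε.const_mul 4).div_const (1-α)).mul_const (q^(1-α))
    simpa using this
  have h2 : Tendsto (fun k => (QQ (p k) q / q - 1/(1+q))^2) atTop (nhds 0) :=
    squeeze_zero (fun k => sq_nonneg _) (fun k => (h k).g_bound hq) h1
  have h3 : Tendsto (fun k => |QQ (p k) q / q - 1/(1+q)|) atTop (nhds 0) := by
    have := h2.sqrt
    simpa [Real.sqrt_sq_eq_abs] using this
  have h4 := (tendsto_zero_iff_abs_tendsto_zero _).mpr h3
  have h5 := (h4.add_const (1/(1+q))).mul_const q
  refine (h5.congr ?_).trans (by rw [zero_add]; apply le_of_eq; congr 1; ring)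
  intro k
  field_simp
  ring

lemma Prof.real_le {α ε : ℝ} {w p} (h : Prof α ε w p) (s : Set ℝ) : (muP p).real s ≤ 1 := by
  apply ENNReal.toReal_le_of_le_ofReal (by simp)
  rw [ENNReal.ofReal_one]
  exact (measure_mono (subset_univ _)).trans (mass_le_one h)

lemma seq_mass (h : ∀ k, Prof α (ε k) w (p k)) (hε : Tendsto ε atTop (nhds 0)) :
    Tendsto (fun k => (muP (p k)).real univ) atTop (nhds 1) := by
  rw [tendsto_order]
  constructor
  · intro a ha
    have hlim : Tendsto (fun q : ℝ => 1 - 1/(1+q)) atTop (nhds (1 - 0)) := by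
      apply Tendsto.const_sub
      simp_rw [one_div]
      exact tendsto_inv_atTop_zero.comp (tendsto_atTop_add_const_left _ _ tendsto_id)
    rw [sub_zero] at hlim
    obtain ⟨q, hq, hq0⟩ := ((hlim.eventually_const_lt ha).and (eventually_gt_atTop 0)).exists
    have e : q/(1+q) = 1 - 1/(1+q) := by field_simp; ring
    have := seq_QQ h hε hq0.le
    rw [e] at this
    filter_upwards [this.eventually_const_lt hq] with k hk
    refine hk.trans_le ?_
    have := (h k).fin
    unfold QQ
    calc _ ≤ ∫ x, (1:ℝ) ∂muP (p k) := by
          apply integral_mono ((h k).int_Q hq0.le) (integrable_const 1)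
          intro x
          simp only
          have := exp_pos (-(q*x))
          linarith
      _ = _ := by simp
  · intro a ha
    exact Eventually.of_forall fun k => ((h k).real_le _).trans_lt ha

lemma seq_mom (h : ∀ k, Prof α (ε k) w (p k)) (hε : Tendsto ε atTop (nhds 0)) (n : ℕ) :
    Tendsto (fun k => ∫ x, (exp (-x))^n ∂(muP (p k))) atTop (nhds (∫ x, (exp (-x))^n ∂lexp)) := by
  rw [lexp_mom]
  have h1 := (seq_mass h hε).sub (seq_QQ h hε (q := n) (by positivity))
  refine (h1.congr ?_).trans (le_of_eq ?_)
  · intro k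
    have := (h k).fin
    have e : ∀ x : ℝ, (exp (-x))^n = 1 - (1 - exp (-((n:ℝ)*x))) := by
      intro x; rw [← Real.exp_nat_mul]; ring_nf
    simp_rw [e]
    rw [integral_sub (integrable_const 1) ((h k).int_Q (by positivity))]
    simp [QQ]
  · congr 1
    field_simp
    ring

lemma seq_N (h : ∀ k, Prof α (ε k) w (p k)) (hε : Tendsto ε atTop (nhds 0)) {t : ℝ} (ht : 0 ≤ t) :
    Tendsto (fun k => (muP (p k)).real (Ioi t)) atTop (nhds (exp (-t))) := by
  have := fun k => (h k).fin
  have h1 := ind_conv (μ := fun k => muP (p k)) (l := lexp) (fun k => ae_muP _) lexp_pos (fun k => (h k).real_le _)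
    lexp_univ.le (seq_mom h hε) (F := fun _ => 1) (by fun_prop) (by fun_prop) (by simp) t
  rw [← lexp_Ioi ht]
  simpa using h1

lemma seq_dd (h : ∀ k, Prof α (ε k) w (p k)) (hε : Tendsto ε atTop (nhds 0)) (x : ℝ) :
    Tendsto (fun k => dd (p k) x) atTop (nhds 0) := by
  have := fun k => (h k).fin
  unfold dd
  have h0 : (0:ℝ≥0∞) = ∫⁻ y in Ioo 0 x, 0 := by simp
  rw [h0]
  apply tendsto_lintegral_of_dominated_convergence (fun _ => 1)
  · intro k
    have := N_meas (p k) x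
    fun_prop
  · intro k
    filter_upwards [ae_restrict_mem measurableSet_Ioo] with y hy
    rw [← ENNReal.ofReal_one]
    apply ENNReal.ofReal_le_ofReal
    have h1 := one_sub_exp_nonneg (t := x-y) (by linarith [hy.2])
    have h2 := Real.exp_pos (-(x-y))
    have h3 := (h k).real_le (Ioi (x-y))
    have h4 : 0 ≤ (muP (p k)).real (Ioi (x-y)) := measureReal_nonneg
    rw [abs_le]; constructor <;> linarith
  · simp
  · filter_upwards [ae_restrict_mem measurableSet_Ioo] with y hy
    have h1 := seq_N h hε (t := x - y) (by linarith [hy.2])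
    have h2 := (h1.sub_const (exp (-(x-y)))).abs
    rw [sub_self, abs_zero] at h2
    have := (ENNReal.continuous_ofReal.tendsto _).comp h2
    simpa [Function.comp_def] using this

lemma seq_int (h : ∀ k, Prof α (ε k) w (p k)) (hε : Tendsto ε atTop (nhds 0)) {x : ℝ} (hx : 0 < x) :
    Tendsto (fun k => ∫ y in Iio x, y * exp (-(x-y)) ∂(muP (p k))) atTop (nhds (x^2/2 * exp (-x))) := by
  have := fun k => (h k).fin
  rw [← lexp_fin_int hx]
  set Y : ℝ → ℝ := fun s => - Real.log (max s (exp (-x))) with hY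
  set F : ℝ → ℝ := fun s => Y s * exp (-(x - Y s)) with hF
  have Yc : Continuous Y := by
    rw [hY]
    apply Continuous.neg
    apply Continuous.log (by fun_prop)
    intro s
    have : exp (-x) ≤ max s (exp (-x)) := le_max_right _ _
    have := exp_pos (-x)
    linarith
  have Fc : Continuous F := by rw [hF]; fun_prop
  have Y0 : ∀ s ∈ Icc (0:ℝ) 1, 0 ≤ Y s := by
    intro s hs
    rw [hY]
    have h1 : exp (-x) ≤ max s (exp (-x)) := le_max_right _ _
    have h2 := exp_pos (-x)
    have h3 : max s (exp (-x)) ≤ 1 := max_le hs.2 (exp_mem hx).2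
    have := Real.log_nonpos (by linarith) h3
    simp only
    linarith
  have h1 := cont_conv (μ := fun k => muP (p k)) (l := lexp) (fun k => ae_muP _) lexp_pos (fun k => (h k).real_le _)
    lexp_univ.le (seq_mom h hε) (F := F) Fc.continuousOn Fc.measurable
  have h2 := ind_conv (μ := fun k => muP (p k)) (l := lexp) (fun k => ae_muP _) lexp_pos (fun k => (h k).real_le _)
    lexp_univ.le (seq_mom h hε) (F := F) Fc.continuousOn Fc.measurable
    (fun s hs => mul_nonneg (Y0 s hs) (exp_pos _).le) x
  have e : ∀ ν : Measure ℝ, IsFiniteMeasure ν → NullSingletonClass ν → (∀ᵐ y ∂ν, 0 < y) →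
      ∫ y, F (exp (-y)) ∂ν - ∫ y in Ioi x, F (exp (-y)) ∂ν = ∫ y in Iio x, y * exp (-(x-y)) ∂ν := by
    intro ν _ _ hν
    have hi := integrable_F hν Fc.continuousOn Fc.measurable
    rw [← integral_add_compl (measurableSet_Iio (a := x)) hi]
    rw [compl_Iio, setIntegral_congr_set (Ioi_ae_eq_Ici (a := x)).symm, add_sub_cancel_right]
    apply setIntegral_congr_fun measurableSet_Iio
    intro y hy
    have hy : y < x := hy
    have : Y (exp (-y)) = y := by
      rw [hY]; simp only
      rw [max_eq_left (by rw [Real.exp_le_exp]; linarith), Real.log_exp, neg_neg]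
    simp only [hF, this]
  have h3 := h1.sub h2
  rw [e lexp inferInstance inferInstance lexp_pos] at h3
  refine h3.congr fun k => ?_
  exact e _ inferInstance inferInstance (ae_muP _)

lemma seq_negmom (h : ∀ k, Prof α (ε k) w (p k)) (hε : Tendsto ε atTop (nhds 0)) :
    ∃ A : ℝ≥0∞, A ≠ ∞ ∧ ∀ᶠ k in atTop, ∫⁻ x, ENNReal.ofReal (x ^ (-α)) ∂muP (p k) ≤ A := by
  have a0 := (h 0).a0
  have a1 := (h 0).a1
  set n := (3+α)/4 with hn
  set x0 := - Real.log ((n+1)/2) with hx0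
  have hx0p : 0 < x0 := by
    rw [hx0]
    have := Real.log_neg (x := (n+1)/2) (by linarith) (by linarith)
    linarith
  have e : exp (-x0) = (n+1)/2 := by rw [hx0, neg_neg, Real.exp_log (by linarith)]
  refine ⟨ENNReal.ofReal (2*x0^(-α)/(2*n-1-α)), ENNReal.ofReal_ne_top, ?_⟩
  have h1 := seq_N h hε hx0p.le
  rw [e] at h1
  filter_upwards [h1.eventually_const_lt (show n < (n+1)/2 by linarith)] with k hk
  have := (h k).fin
  apply negmom (h k) hx0p _ (by linarith)
  rw [← ofReal_measureReal]
  exact ENNReal.ofReal_le_ofReal hk.le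

lemma seq_FF (h : ∀ k, Prof α (ε k) w (p k)) (hε : Tendsto ε atTop (nhds 0)) {x : ℝ} (hx : 0 < x) :
    Tendsto (fun k => (FF (p k) x).toReal) atTop (nhds (x^2/2 * exp (-x))) := by
  obtain ⟨A, hA, hAk⟩ := seq_negmom h hε
  set C : ℝ≥0∞ := 2 + 1 * (4 * A) with hC
  have hCt : C ≠ ∞ := by
    rw [hC, one_mul]
    exact ENNReal.add_ne_top.mpr ⟨by simp, ENNReal.mul_ne_top (by simp) hA⟩
  have h1 : Tendsto (fun k => (C * dd (p k) x).toReal) atTop (nhds 0) := by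
    have := ENNReal.Tendsto.const_mul (a := C) (seq_dd h hε x) (Or.inr hCt)
    rw [mul_zero] at this
    have := (ENNReal.tendsto_toReal (by simp)).comp this
    simpa [Function.comp_def] using this
  have h2 : Tendsto (fun k => (FF (p k) x).toReal - ∫ y in Iio x, y * exp (-(x-y)) ∂(muP (p k))) atTop (nhds 0) := by
    apply squeeze_zero_norm' _ h1
    filter_upwards [hAk, hε.eventually_lt_const one_pos] with k hk hk1
    rw [Real.norm_eq_abs]
    apply final_est (h k) hCt
    filter_upwards [dens_le (h k) hk] with y hy
    refine hy.trans ?_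
    rw [hC]
    gcongr
    rw [← ENNReal.ofReal_one]
    exact ENNReal.ofReal_le_ofReal hk1.le
  have h3 := h2.add (seq_int h hε hx)
  simpa using h3

lemma seq_II (h : ∀ k, Prof α (ε k) w (p k)) (hε : Tendsto ε atTop (nhds 0)) {x : ℝ} (hx : 0 < x) :
    Tendsto (fun k => (II (ε k) w (p k) x).toReal) atTop (nhds (x^2 * exp (-x))) := by
  obtain ⟨A, hA, hAk⟩ := seq_negmom h hε
  have hB : ENNReal.ofReal x * (4 * A) ≠ ∞ := ENNReal.mul_ne_top (by simp) (ENNReal.mul_ne_top (by simp) hA)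
  have hT : Tendsto (fun k => (ENNReal.ofReal (ε k) * TT w (p k) x)) atTop (nhds 0) := by
    have h1 : Tendsto (fun k => (ENNReal.ofReal (ε k) * (ENNReal.ofReal x * (4 * A)))) atTop (nhds 0) := by
      have h0 : Tendsto (fun k => ENNReal.ofReal (ε k)) atTop (nhds 0) := by
        have := (ENNReal.continuous_ofReal.tendsto 0).comp hε
        simpa [Function.comp_def] using this
      have := ENNReal.Tendsto.mul_const h0 (Or.inr hB)
      simpa using this
    refine tendsto_of_tendsto_of_tendsto_of_le_of_le' tendsto_const_nhds h1 (Eventually.of_forall fun _ => zero_le) ?_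
    filter_upwards [hAk] with k hk
    gcongr
    refine (TT_le (h k) x).trans ?_
    gcongr
  have hF : Tendsto (fun k => 2 * FF (p k) x) atTop (nhds (2 * ENNReal.ofReal (x^2/2 * exp (-x)))) := by
    apply ENNReal.Tendsto.const_mul _ (Or.inr (by simp))
    have := (ENNReal.continuous_ofReal.tendsto _).comp (seq_FF h hε hx)
    refine this.congr fun k => ?_
    exact ENNReal.ofReal_toReal (ne_top_of_le_ne_top ENNReal.ofReal_ne_top (FF_le (h k) x))
  have h3 := hF.add hT
  rw [add_zero] at h3
  simp_rw [fun k => II_split (ε := ε k) (h k).toWOk (p k) x]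
  have := (ENNReal.tendsto_toReal (ENNReal.mul_ne_top (by simp) ENNReal.ofReal_ne_top)).comp h3
  refine this.trans (le_of_eq ?_)
  rw [ENNReal.toReal_mul, ENNReal.toReal_ofReal (by positivity)]
  congr 1
  simp; ring
end seq

lemma rpow_le_one_add {t α : ℝ} (ht : 0 ≤ t) (h0 : 0 ≤ α) (h1 : α ≤ 1) : t ^ α ≤ 1 + t := by
  rcases le_total t 1 with h | h
  · have := Real.rpow_le_one ht h h0
    linarith
  · have := Real.rpow_le_rpow_of_exponent_le h h1
    rw [Real.rpow_one] at this
    linarith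

lemma Kk_le {α ε : ℝ} {w} (hw : WOk α w) (he : 0 < ε) {y z d : ℝ} (hy : 0 < y) (hd : 0 < d) (hz : d ≤ z) :
    Kk ε w y z ≤ ENNReal.ofReal (((2+2*ε)/d + ε/y + ε*y/d^2) * z) := by
  have hz0 : 0 < z := hd.trans_le hz
  have h1 : w y z ≤ ENNReal.ofReal (2 + y/z + z/y) := by
    refine (hw.wle y z hy hz0).trans (ENNReal.ofReal_le_ofReal ?_)
    have := rpow_le_one_add (t := y/z) (by positivity) hw.a0.le hw.a1.le
    have := rpow_le_one_add (t := z/y) (by positivity) hw.a0.le hw.a1.le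
    linarith
  unfold Kk
  calc 2 + ENNReal.ofReal ε * w y z ≤ ENNReal.ofReal 2 + ENNReal.ofReal ε * ENNReal.ofReal (2 + y/z + z/y) := by
        gcongr; simp
    _ = ENNReal.ofReal (2 + ε * (2 + y/z + z/y)) := by
        rw [← ENNReal.ofReal_mul he.le, ← ENNReal.ofReal_add (by norm_num) (by positivity)]
    _ ≤ _ := by
        apply ENNReal.ofReal_le_ofReal
        have h2 : 1 ≤ z/d := by rw [le_div_iff₀ hd]; linarith
        have h3 : y/z ≤ y/d := by gcongr
        have h4 : y/d ≤ y/d * (z/d) := by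
          have : 0 ≤ y/d := by positivity
          nlinarith
        have h5 : ((2+2*ε)/d + ε/y + ε*y/d^2) * z = (2+2*ε)*(z/d) + ε*(z/y) + ε*(y/d*(z/d)) := by
          field_simp
        rw [h5]
        nlinarith

lemma muP_Ici_fin {p : ℝ → ℝ≥0∞} (mass : ∫⁻ x, ENNReal.ofReal x ∂muP p = 1) {d : ℝ} (hd : 0 < d) :
    muP p (Ici d) ≠ ∞ := by
  have h1 : ENNReal.ofReal d * muP p {x | ENNReal.ofReal d ≤ ENNReal.ofReal x} ≤ 1 := by
    rw [← mass]
    exact mul_meas_ge_le_lintegral (by fun_prop) _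
  have h2 : Ici d ⊆ {x | ENNReal.ofReal d ≤ ENNReal.ofReal x} := fun x hx => ENNReal.ofReal_le_ofReal hx
  have h3 : ENNReal.ofReal d * muP p (Ici d) ≤ 1 := (mul_le_mul_right (measure_mono h2) _).trans h1
  intro h
  rw [h, ENNReal.mul_top (by simpa using hd)] at h3
  simp at h3

lemma II_fin_local {α ε : ℝ} {w p} (hw : WOk α w) (he : 0 < ε)
    (mass : ∫⁻ x, ENNReal.ofReal x ∂muP p = 1) {x0 b : ℝ} (hx0 : 0 < x0) (hb : x0 < b)
    (hfin : II ε w p x0 ≠ ∞) : ∫⁻ x in Ioi 0, (Ioo x0 b).indicator 1 x * II ε w p x ≠ ∞ := by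
  rw [II_tonelli hw p (measurable_one.indicator measurableSet_Ioo)]
  set M := ENNReal.ofReal (b * ((2+2*ε)/x0 + ε/x0 + ε*b/x0^2)) with hM
  have mK := Kk_meas (ε := ε) hw
  have mI := Ind_m2 x0
  have key : ∀ y z : ℝ, 0 < y → 0 < z →
      ENNReal.ofReal y * Kk ε w y z * (∫⁻ x in Ioo y (y + z), (Ioo x0 b).indicator 1 x) ≤
      (ENNReal.ofReal (b - x0) * (ENNReal.ofReal y * Kk ε w y z * Ind y z x0) +
      ENNReal.ofReal b * (ENNReal.ofReal z * Kk ε w z y * Ind z y x0)) +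
      ENNReal.ofReal (b - x0) * (M * ((Ici x0).indicator 1 y * ENNReal.ofReal z)) := by
    intro y z hy hz
    have hL : ∫⁻ x in Ioo y (y + z), (Ioo x0 b).indicator (1 : ℝ → ℝ≥0∞) x = volume (Ioo x0 b ∩ Ioo y (y+z)) := by
      rw [lintegral_indicator_one measurableSet_Ioo, Measure.restrict_apply measurableSet_Ioo]
    rw [hL]
    have hL1 : volume (Ioo x0 b ∩ Ioo y (y+z)) ≤ ENNReal.ofReal (b - x0) := by
      rw [← Real.volume_Ioo]; exact measure_mono inter_subset_left
    have hL2 : volume (Ioo x0 b ∩ Ioo y (y+z)) ≤ ENNReal.ofReal z := by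
      have : ENNReal.ofReal z = volume (Ioo y (y+z)) := by rw [Real.volume_Ioo]; ring_nf
      rw [this]; exact measure_mono inter_subset_right
    by_cases hne : (Ioo x0 b ∩ Ioo y (y+z)).Nonempty
    swap
    · rw [not_nonempty_iff_eq_empty] at hne
      rw [hne]; simp
    obtain ⟨t, ht1, ht2⟩ := hne
    have hyb : y < b := ht2.1.trans ht1.2
    have hyz : x0 < y + z := ht1.1.trans ht2.2
    by_cases h1 : y < x0
    · have : Ind y z x0 = 1 := by unfold Ind; rw [indicator_of_mem (by exact ⟨h1, hyz⟩)]; rfl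
      rw [this, mul_one]
      refine le_trans ?_ le_self_add
      refine le_trans ?_ le_self_add
      rw [mul_comm (ENNReal.ofReal (b - x0))]
      gcongr
    push Not at h1
    by_cases h2 : z < x0
    · have : Ind z y x0 = 1 := by unfold Ind; rw [indicator_of_mem (by exact ⟨h2, by linarith⟩)]; rfl
      rw [this, mul_one]
      refine le_trans ?_ le_self_add
      refine le_trans ?_ le_add_self
      have hs : Kk ε w z y = Kk ε w y z := by unfold Kk; rw [hw.wsymm]
      rw [hs, mul_assoc, mul_comm (Kk ε w y z)]
      gcongr
    push Not at h2
    · refine le_trans ?_ le_add_self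
      rw [indicator_of_mem (by exact h1), Pi.one_apply, one_mul, mul_comm (ENNReal.ofReal (b - x0))]
      refine mul_le_mul' ?_ hL1
      calc _ ≤ ENNReal.ofReal y * ENNReal.ofReal (((2+2*ε)/x0 + ε/y + ε*y/x0^2) * z) := by
            gcongr; exact Kk_le hw he hy hx0 h2
        _ ≤ ENNReal.ofReal b * ENNReal.ofReal (((2+2*ε)/x0 + ε/x0 + ε*b/x0^2) * z) := by
            have : ((2+2*ε)/x0 + ε/y + ε*y/x0^2) * z ≤ ((2+2*ε)/x0 + ε/x0 + ε*b/x0^2) * z := by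
              gcongr
            gcongr
        _ = M * ENNReal.ofReal z := by
            have : 0 < b := hy.trans hyb
            rw [hM, ← ENNReal.ofReal_mul (by positivity), ← ENNReal.ofReal_mul (by positivity)]
            congr 1; ring
  have mf : Measurable (fun q : ℝ × ℝ => ENNReal.ofReal q.1 * Kk ε w q.1 q.2 * Ind q.1 q.2 x0) := by fun_prop
  have mg : Measurable (fun q : ℝ × ℝ => ENNReal.ofReal q.2 * Kk ε w q.2 q.1 * Ind q.2 q.1 x0) :=
    mf.comp measurable_swap
  have mf1 : ∀ y, Measurable (fun z => ENNReal.ofReal y * Kk ε w y z * Ind y z x0) := fun y =>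
    mf.comp (f := fun z => (y,z)) (by fun_prop)
  have mg1 : ∀ y, Measurable (fun z => ENNReal.ofReal z * Kk ε w z y * Ind z y x0) := fun y =>
    mg.comp (f := fun z => (y,z)) (by fun_prop)
  have mF := Measurable.lintegral_prod_right' (ν := muP p) mf
  have mG := Measurable.lintegral_prod_right' (ν := muP p) mg
  simp only at mF mG
  have mi : Measurable ((Ici x0).indicator (1 : ℝ → ℝ≥0∞)) := measurable_one.indicator measurableSet_Ici
  have hle : ∫⁻ y, ∫⁻ z, ENNReal.ofReal y * Kk ε w y z * (∫⁻ x in Ioo y (y + z), (Ioo x0 b).indicator 1 x) ∂muP p ∂muP p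
      ≤ ENNReal.ofReal (b - x0) * II ε w p x0 + ENNReal.ofReal b * II ε w p x0 +
        ENNReal.ofReal (b - x0) * (M * muP p (Ici x0)) := by
    calc _ ≤ ∫⁻ y, ∫⁻ z, (ENNReal.ofReal (b - x0) * (ENNReal.ofReal y * Kk ε w y z * Ind y z x0) +
      ENNReal.ofReal b * (ENNReal.ofReal z * Kk ε w z y * Ind z y x0)) +
      ENNReal.ofReal (b - x0) * (M * ((Ici x0).indicator 1 y * ENNReal.ofReal z)) ∂muP p ∂muP p := by
          apply lintegral_mono_ae
          filter_upwards [ae_muP p] with y hy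
          apply lintegral_mono_ae
          filter_upwards [ae_muP p] with z hz
          exact key y z hy hz
      _ = ∫⁻ y, ((ENNReal.ofReal (b - x0) * ∫⁻ z, (ENNReal.ofReal y * Kk ε w y z * Ind y z x0) ∂muP p) +
      (ENNReal.ofReal b * ∫⁻ z, (ENNReal.ofReal z * Kk ε w z y * Ind z y x0) ∂muP p)) +
      ENNReal.ofReal (b - x0) * (M * ((Ici x0).indicator 1 y)) ∂muP p := by
          congr 1; ext y
          have a1 := mf1 y
          have a2 := mg1 y
          rw [lintegral_add_left (by fun_prop), lintegral_add_left (by fun_prop), lintegral_const_mul _ a1,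
            lintegral_const_mul _ a2, lintegral_const_mul _ (by fun_prop), lintegral_const_mul _ (by fun_prop),
            lintegral_const_mul _ (by fun_prop), mass, mul_one]
      _ = _ := by
          rw [lintegral_add_left (by fun_prop), lintegral_add_left (by fun_prop), lintegral_const_mul _ mF,
            lintegral_const_mul _ mG, lintegral_const_mul _ (by fun_prop), lintegral_const_mul _ mi,
            lintegral_indicator_one measurableSet_Ici]
          congr 3
          rw [lintegral_lintegral_swap]
          · rfl
          · exact mg.aemeasurable
  refine ne_top_of_le_ne_top ?_ hle
  have h3 := muP_Ici_fin mass hx0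
  have h4 : M ≠ ∞ := ENNReal.ofReal_ne_top
  finiteness

lemma II_fin_ae {α ε : ℝ} {w p} (hw : WOk α w) (he : 0 < ε)
    (mass : ∫⁻ x, ENNReal.ofReal x ∂muP p = 1) {x0 : ℝ} (hx0 : 0 < x0)
    (hfin : II ε w p x0 ≠ ∞) : ∀ᵐ x ∂(volume : Measure ℝ), x0 < x → II ε w p x ≠ ∞ := by
  have h1 : ∀ n : ℕ, ∀ᵐ x ∂(volume : Measure ℝ), x ∈ Ioo x0 (x0 + n + 1) → II ε w p x ≠ ∞ := by
    intro n
    have h2 := II_fin_local hw he mass hx0 (b := x0 + n + 1) (by have : (0:ℝ) ≤ n := by positivity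
                                                                 linarith) hfin
    have m := II_meas (ε := ε) hw p
    have mi : Measurable ((Ioo x0 (x0 + n + 1)).indicator (1 : ℝ → ℝ≥0∞)) := measurable_one.indicator measurableSet_Ioo
    have h3 := ae_lt_top (by fun_prop) h2
    rw [ae_restrict_iff' measurableSet_Ioi] at h3
    filter_upwards [h3] with x hx hxm
    have := hx (hx0.trans hxm.1)
    rw [indicator_of_mem hxm, Pi.one_apply, one_mul] at this
    exact this.ne
  rw [← ae_all_iff] at h1
  filter_upwards [h1] with x hx hxx
  obtain ⟨n, hn⟩ := exists_nat_gt (x - x0)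
  exact hx n ⟨hxx, by linarith⟩

lemma mkProf {α ε : ℝ} {w p} (hw : WOk α w) (he : 0 < ε) (pm : Measurable p) (pfin : ∀ x, p x ≠ ∞)
    (mass : ∫⁻ x, ENNReal.ofReal x ∂muP p = 1)
    (eqn : ∀ᵐ x ∂(volume.restrict (Ioi (0:ℝ))), x ^ 2 * (p x).toReal = (II ε w p x).toReal) :
    Prof α ε w p := by
  have small : ∀ δ : ℝ, 0 < δ → ∃ x0, 0 < x0 ∧ x0 < δ ∧ II ε w p x0 ≠ ∞ := by
    intro δ hδ
    by_contra! hcon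
    have hp : ∀ᵐ y ∂muP p, δ ≤ y := by
      unfold muP
      rw [ae_withDensity_iff pm]
      filter_upwards [eqn, ae_restrict_mem measurableSet_Ioi] with y hy hy0
      intro hpy
      by_contra! hlt
      have hy0 : 0 < y := hy0
      rw [hcon y hy0 hlt, ENNReal.toReal_top] at hy
      have : (p y).toReal = 0 := by
        rcases mul_eq_zero.mp hy with h | h
        · exact absurd h (by positivity)
        · exact h
      rw [ENNReal.toReal_eq_zero_iff] at this
      exact this.elim hpy (pfin y)
    have h0 : II ε w p (δ/2) = 0 := by
      unfold II
      rw [← lintegral_zero (μ := muP p)]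
      apply lintegral_congr_ae
      filter_upwards [hp] with y hy
      rw [← lintegral_zero (μ := muP p)]
      congr 1; ext z
      have : Ind y z (δ/2) = 0 := by
        unfold Ind; rw [indicator_of_notMem]
        intro h; have := h.1; linarith
      rw [this, mul_zero]
    have := hcon (δ/2) (by linarith) (by linarith)
    rw [h0] at this
    exact ENNReal.zero_ne_top this
  have hfin : ∀ᵐ x ∂(volume.restrict (Ioi (0:ℝ))), II ε w p x ≠ ∞ := by
    have h1 : ∀ n : ℕ, ∀ᵐ x ∂(volume : Measure ℝ), 1/((n:ℝ)+1) < x → II ε w p x ≠ ∞ := by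
      intro n
      obtain ⟨x0, a, b, c⟩ := small (1/((n:ℝ)+1)) (by positivity)
      filter_upwards [II_fin_ae hw he mass a c] with x hx hxx
      exact hx (b.trans hxx)
    rw [← ae_all_iff] at h1
    rw [ae_restrict_iff' measurableSet_Ioi]
    filter_upwards [h1] with x hx hxx
    obtain ⟨n, hn⟩ := exists_nat_one_div_lt (show 0 < x from hxx)
    exact hx n hn
  refine { hw with e0 := he, pm := pm, pfin := pfin, mass := mass, eqn := ?_ }
  filter_upwards [eqn, hfin] with x h1 h2
  rw [← ENNReal.toReal_eq_toReal_iff' (ENNReal.mul_ne_top ENNReal.ofReal_ne_top (pfin x)) h2, ← h1,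
    ENNReal.toReal_mul, ENNReal.toReal_ofReal (by positivity)]

lemma II_form {α ε : ℝ} {w p} (hw : WOk α w) (pm : Measurable p) (x : ℝ) :
    II ε w p x = ∫⁻ y in Ioo 0 x, p y * ∫⁻ z in Ioi (x-y), p z * (ENNReal.ofReal y * Kk ε w y z) := by
  have mK := Kk_meas (ε := ε) hw
  have mI := Ind_m2 x
  have mf : Measurable (fun q : ℝ × ℝ => ENNReal.ofReal q.1 * Kk ε w q.1 q.2 * Ind q.1 q.2 x) := by fun_prop
  have mf1 : ∀ y, Measurable (fun z => ENNReal.ofReal y * Kk ε w y z * Ind y z x) := fun y =>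
    mf.comp (f := fun z => (y,z)) (by fun_prop)
  have mF := Measurable.lintegral_prod_right' (ν := muP p) mf
  unfold II
  rw [lint_muP pm mF]
  have e : Ioo 0 x = Iio x ∩ Ioi 0 := by rw [Iio_inter_Ioi]
  rw [e, ← Measure.restrict_restrict measurableSet_Iio, ← lintegral_indicator measurableSet_Iio]
  apply lintegral_congr
  intro y
  by_cases hy : y ∈ Iio x
  · rw [indicator_of_mem hy]
    congr 1
    rw [lint_muP pm (mf1 y)]
    have hy : y < x := hy
    have e2 : Ioi (x - y) = Ioi (x-y) ∩ Ioi 0 := by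
      rw [inter_eq_left.mpr]; exact Ioi_subset_Ioi (by linarith)
    rw [e2, ← Measure.restrict_restrict measurableSet_Ioi, ← lintegral_indicator (s := Ioi (x-y)) measurableSet_Ioi]
    apply lintegral_congr
    intro z
    by_cases hz : z ∈ Ioi (x-y)
    · rw [indicator_of_mem hz]
      have hz : x - y < z := hz
      have : Ind y z x = 1 := by unfold Ind; rw [indicator_of_mem (by exact ⟨hy, by linarith⟩)]; rfl
      rw [this, mul_one]
    · rw [indicator_of_notMem hz]
      have : Ind y z x = 0 := by
        unfold Ind; rw [indicator_of_notMem]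
        intro h; apply hz; have := h.2; rw [mem_Ioi]; linarith
      rw [this]; simp
  · rw [indicator_of_notMem hy]
    have : ∀ z, Ind y z x = 0 := by
      intro z; unfold Ind; rw [indicator_of_notMem]; intro h; exact hy h.1
    simp [this]

noncomputable def wOf (W : ℝ → ℝ → ℝ) (y z : ℝ) : ℝ≥0∞ :=
  (Ioi (0:ℝ) ×ˢ Ioi (0:ℝ)).indicator (fun q : ℝ × ℝ => ENNReal.ofReal (W q.1 q.2)) (y, z)

lemma wOf_pos (W : ℝ → ℝ → ℝ) {y z : ℝ} (hy : 0 < y) (hz : 0 < z) : wOf W y z = ENNReal.ofReal (W y z) := by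
  unfold wOf
  rw [indicator_of_mem (by exact ⟨hy, hz⟩)]

lemma wOf_ok {α : ℝ} (hα : α ∈ Ioo (0:ℝ) 1) {W : ℝ → ℝ → ℝ} (hW : GoodW α W) : WOk α (wOf W) := by
  obtain ⟨h1, h2, h3, h4⟩ := hW
  refine ⟨hα.1, hα.2, ?_, ?_, ?_⟩
  · have hs : MeasurableSet (Ioi (0:ℝ) ×ˢ Ioi (0:ℝ)) := measurableSet_Ioi.prod measurableSet_Ioi
    have hc : ContinuousOn (fun q : ℝ × ℝ => ENNReal.ofReal (W q.1 q.2)) (Ioi 0 ×ˢ Ioi 0) :=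
      ENNReal.continuous_ofReal.comp_continuousOn h1
    have := hc.measurable_piecewise (continuousOn_const (c := (0:ℝ≥0∞))) hs
    rw [show (Ioi (0:ℝ) ×ˢ Ioi (0:ℝ)).piecewise (fun q : ℝ × ℝ => ENNReal.ofReal (W q.1 q.2)) (fun _ => 0) =
      Function.uncurry (wOf W) from ?_] at this
    · exact this
    · ext ⟨y, z⟩
      simp only [Function.uncurry, wOf, Set.piecewise, Set.indicator]
  · intro y z
    by_cases h : 0 < y ∧ 0 < z
    · rw [wOf_pos W h.1 h.2, wOf_pos W h.2 h.1, h2 y z h.1 h.2]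
    · unfold wOf
      rw [indicator_of_notMem (by exact h), indicator_of_notMem (by exact fun h' => h ⟨h'.2, h'.1⟩)]
  · intro y z hy hz
    rw [wOf_pos W hy hz]
    exact ENNReal.ofReal_le_ofReal (h4 y z hy hz).2

lemma Kk_toReal {α ε : ℝ} (he : 0 < ε) {W : ℝ → ℝ → ℝ} (hW : GoodW α W) {y z : ℝ} (hy : 0 < y) (hz : 0 < z) :
    (Kk ε (wOf W) y z).toReal = Kern ε W y z := by
  unfold Kk Kern
  rw [wOf_pos W hy hz, ENNReal.toReal_add (by simp) (by finiteness), ENNReal.toReal_mul,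
    ENNReal.toReal_ofReal he.le, ENNReal.toReal_ofReal (hW.2.2.2 y z hy hz).1]
  simp

lemma bridge {α ε : ℝ} (hα : α ∈ Ioo (0:ℝ) 1) (he : 0 < ε) {W : ℝ → ℝ → ℝ} (hW : GoodW α W)
    {φ : ℝ → ℝ} {p : ℝ → ℝ≥0∞} (pm : Measurable p) (pfin : ∀ x, p x ≠ ∞)
    (mass : ∫⁻ x, ENNReal.ofReal x ∂muP p = 1)
    (hp : ∀ᵐ x ∂(volume.restrict (Ioi (0:ℝ))), φ x = (p x).toReal) (x : ℝ) :
    ∫ y in Ioo 0 x, ∫ z in Ioi (x - y), y * Kern ε W y z * φ y * φ z = (II ε (wOf W) p x).toReal := by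
  have hw := wOf_ok hα hW
  have mK := Kk_meas (ε := ε) hw
  have mK1 : ∀ y, Measurable (fun z => Kk ε (wOf W) y z) := fun y =>
    mK.comp (f := fun z => (y,z)) (by fun_prop)
  set G : ℝ → ℝ≥0∞ := fun y => ∫⁻ z in Ioi (x-y), p z * (ENNReal.ofReal y * Kk ε (wOf W) y z) with hG
  have mG : Measurable G := by
    have : G = fun y => ∫⁻ z, (fun q : ℝ × ℝ => {q : ℝ × ℝ | x - q.1 < q.2}.indicator
        (fun q => p q.2 * (ENNReal.ofReal q.1 * Kk ε (wOf W) q.1 q.2)) q) (y, z) := by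
      ext y
      rw [hG]; simp only
      rw [← lintegral_indicator measurableSet_Ioi]
      rfl
    rw [this]
    apply Measurable.lintegral_prod_right'
    apply Measurable.indicator (by fun_prop)
    exact measurableSet_lt (by fun_prop) (by fun_prop)
  have Gfin : ∀ y ∈ Ioo 0 x, G y ≠ ∞ := by
    intro y hy
    have hd : 0 < x - y := by linarith [hy.2]
    have hle : G y ≤ ENNReal.ofReal (y * ((2+2*ε)/(x-y) + ε/y + ε*y/(x-y)^2)) * 1 := by
      rw [← mass, lint_muP pm (by fun_prop), ← lintegral_const_mul _ (by fun_prop)]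
      calc G y ≤ ∫⁻ z in Ioi (x-y), ENNReal.ofReal (y * ((2+2*ε)/(x-y) + ε/y + ε*y/(x-y)^2)) * (p z * ENNReal.ofReal z) := by
            apply setLIntegral_mono (by fun_prop)
            intro z hz
            have h1 := Kk_le hw he hy.1 hd (le_of_lt (show x - y < z from hz))
            have hy0 := hy.1
            rw [ENNReal.ofReal_mul (by positivity)] at h1 ⊢
            calc _ ≤ p z * (ENNReal.ofReal y * (ENNReal.ofReal ((2+2*ε)/(x-y) + ε/y + ε*y/(x-y)^2) * ENNReal.ofReal z)) := by
                  gcongr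
              _ = _ := by ring
        _ ≤ _ := lintegral_mono_set (Ioi_subset_Ioi hd.le)
    exact ne_top_of_le_ne_top (by finiteness) hle
  have inner : ∀ y ∈ Ioo 0 x, ∫ z in Ioi (x - y), y * Kern ε W y z * φ y * φ z = φ y * (G y).toReal := by
    intro y hy
    have hd : 0 < x - y := by linarith [hy.2]
    have hsub : Ioi (x-y) ⊆ Ioi 0 := Ioi_subset_Ioi hd.le
    rw [hG]; simp only
    have mK2 := mK1 y
    rw [← integral_toReal (by fun_prop), ← integral_const_mul]
    · apply integral_congr_ae
      filter_upwards [ae_restrict_of_ae_restrict_of_subset hsub hp, ae_restrict_mem measurableSet_Ioi] with z hz hz0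
      have hz0 : 0 < z := hsub hz0
      rw [ENNReal.toReal_mul, ENNReal.toReal_mul, Kk_toReal he hW hy.1 hz0, ENNReal.toReal_ofReal hy.1.le, ← hz]
      ring
    · filter_upwards [ae_restrict_mem measurableSet_Ioi] with z hz
      have hz0 : 0 < z := hsub hz
      have h1 := Kk_le hw he hy.1 hz0 le_rfl
      have h2 : Kk ε (wOf W) y z ≠ ∞ := ne_top_of_le_ne_top (by finiteness) h1
      have h3 := pfin z
      finiteness
  have mpG : Measurable (fun y => p y * G y) := pm.mul mG
  have eII : II ε (wOf W) p x = ∫⁻ y in Ioo 0 x, p y * G y := II_form hw pm x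
  clear_value G
  rw [eII, ← integral_toReal mpG.aemeasurable]
  · rw [setIntegral_congr_fun measurableSet_Ioo inner]
    apply integral_congr_ae
    filter_upwards [ae_restrict_of_ae_restrict_of_subset (Ioo_subset_Ioi_self) hp] with y hy
    rw [ENNReal.toReal_mul, hy]
  · filter_upwards [ae_restrict_mem measurableSet_Ioo] with y hy
    have h1 := Gfin y hy
    have h3 := pfin y
    exact (ENNReal.mul_ne_top h3 h1).lt_top

lemma exists_prof {α ε : ℝ} (hα : α ∈ Ioo (0:ℝ) 1) (he : 0 < ε) {W : ℝ → ℝ → ℝ} (hW : GoodW α W)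
    {φ : ℝ → ℝ} (hφ : IsProfile (Kern ε W) φ) (hn : IsNormalised φ) :
    ∃ p, Prof α ε (wOf W) p ∧ ∀ x, ∫ y in Ioo 0 x, ∫ z in Ioi (x - y), y * Kern ε W y z * φ y * φ z
      = (II ε (wOf W) p x).toReal := by
  obtain ⟨h1, h2, h3, h4⟩ := hφ
  have hm := h1.aestronglyMeasurable.aemeasurable
  set p : ℝ → ℝ≥0∞ := fun x => ENNReal.ofReal (hm.mk φ x) with hpdef
  have pm : Measurable p := ENNReal.measurable_ofReal.comp hm.measurable_mk
  have pfin : ∀ x, p x ≠ ∞ := fun x => ENNReal.ofReal_ne_top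
  have hp : ∀ᵐ x ∂(volume.restrict (Ioi (0:ℝ))), φ x = (p x).toReal := by
    filter_upwards [h2, hm.ae_eq_mk] with x a b
    rw [hpdef]; simp only
    rw [← b, ENNReal.toReal_ofReal a]
  have mass : ∫⁻ x, ENNReal.ofReal x ∂muP p = 1 := by
    rw [lint_muP pm (by fun_prop)]
    have h5 : ∫⁻ x in Ioi 0, ENNReal.ofReal (x * φ x) = 1 := by
      rw [← ofReal_integral_eq_lintegral_ofReal h3, hn, ENNReal.ofReal_one]
      filter_upwards [h2, ae_restrict_mem measurableSet_Ioi] with x a b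
      have b : 0 < x := b
      exact mul_nonneg b.le a
    rw [← h5]
    apply lintegral_congr_ae
    filter_upwards [hp, ae_restrict_mem measurableSet_Ioi] with x a b
    have b : 0 < x := b
    rw [ENNReal.ofReal_mul b.le, a, ENNReal.ofReal_toReal (pfin x), mul_comm]
  have br := bridge hα he hW pm pfin mass hp
  refine ⟨p, mkProf (wOf_ok hα hW) he pm pfin mass ?_, br⟩
  filter_upwards [h4, hp] with x a b
  rw [← br, ← a, b]

theorem stmt6 (α : ℝ) (hα : α ∈ Ioo (0:ℝ) 1) (W : ℝ → ℝ → ℝ) (hW : GoodW α W)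
    (ε : ℕ → ℝ) (hε : ∀ k, 0 < ε k) (hlim : Tendsto ε atTop (nhds 0))
    (φ : ℕ → ℝ → ℝ) (hφ : ∀ k, IsProfile (Kern (ε k) W) (φ k) ∧ IsNormalised (φ k)) :
    (∀ x : ℝ, 0 < x →
      (∀ k, x ^ 2 * φ k x =
        ∫ y in Ioo 0 x, ∫ z in Ioi (x - y), y * Kern (ε k) W y z * φ k y * φ k z) →
      Tendsto (fun k => φ k x) atTop (nhds (exp (-x)))) ∧
    (∀ᵐ x ∂(volume.restrict (Ioi (0:ℝ))),
      Tendsto (fun k => φ k x) atTop (nhds (exp (-x)))) := by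
  choose p hp hbr using fun k => exists_prof hα (hε k) hW (hφ k).1 (hφ k).2
  have main : ∀ x : ℝ, 0 < x →
      (∀ k, x ^ 2 * φ k x =
        ∫ y in Ioo 0 x, ∫ z in Ioi (x - y), y * Kern (ε k) W y z * φ k y * φ k z) →
      Tendsto (fun k => φ k x) atTop (nhds (exp (-x))) := by
    intro x hx heq
    have h1 := (seq_II hp hlim hx).div_const (x^2)
    have e : x^2 * exp (-x) / x^2 = exp (-x) := by field_simp
    rw [e] at h1
    refine h1.congr fun k => ?_
    rw [← hbr k x, ← heq k]
    field_simp
  refine ⟨main, ?_⟩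
  have hall : ∀ᵐ x ∂(volume.restrict (Ioi (0:ℝ))), ∀ k, x ^ 2 * φ k x =
        ∫ y in Ioo 0 x, ∫ z in Ioi (x - y), y * Kern (ε k) W y z * φ k y * φ k z := by
    rw [ae_all_iff]
    exact fun k => (hφ k).1.2.2.2
  filter_upwards [hall, ae_restrict_mem measurableSet_Ioi] with x hx hx0
  exact main x hx0 hx
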